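/- arXiv:2509.00241 — 2 statements merged into one kernel-verified Lean document; each statement's English description precedes it below -/
import Mathlib

section
/- For the map f, for every nonempty closed connected subset C ⊆ S, the set {x ∈ [0,1] : V(x) = πC} has Hausdorff dimension 1. -/
open MeasureTheory Filter Topology Set
open scoped ENNReal

noncomputable section

/-- The interval map `f` of Serre–Yang type: `f(x) = x + 18x³` on `[0,1/3]`,
`f(x) = x + 72(x − 1/2)³` on `(1/3,2/3)` and `f(x) = x + 18(x − 1)³` on `[2/3,1]`. -/
def theMap : ℝ → ℝ := fun x =>
  if x ≤ 1 / 3 then x + 18 * x ^ 3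
  else if x < 2 / 3 then x + 72 * (x - 1 / 2) ^ 3
  else x + 18 * (x - 1) ^ 3

/-- The three neutral fixed points `0`, `1/2`, `1`. -/
def theFixedPts : Fin 3 → ℝ := ![0, 1 / 2, 1]

/-- The `n`-th empirical measure `e_n(x) = (1/n) ∑_{k<n} δ_{f^k x}`. -/
def empMeasure (f : ℝ → ℝ) (n : ℕ) (x : ℝ) : Measure ℝ :=
  (n : ℝ≥0∞)⁻¹ • ∑ k ∈ Finset.range n, Measure.dirac (f^[k] x)

/-- Weak* convergence of a sequence of measures, tested against bounded continuous functions. -/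
def WeakTendsto (μ : ℕ → Measure ℝ) (ν : Measure ℝ) : Prop :=
  ∀ g : BoundedContinuousFunction ℝ ℝ,
    Tendsto (fun n => ∫ y, g y ∂(μ n)) atTop (𝓝 (∫ y, g y ∂ν))

/-- `V(x)`: the set of weak* limit points of `(e_n(x))_{n ≥ 1}`. -/
def Vset (f : ℝ → ℝ) (x : ℝ) : Set (Measure ℝ) :=
  {ν | ∃ φ : ℕ → ℕ, StrictMono φ ∧ WeakTendsto (fun k => empMeasure f (φ k + 1) x) ν}

/-- The simplex `S = {p̄ ∈ [0,1]³ : p₁ + p₂ + p₃ = 1}`. -/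
def simplexS : Set (Fin 3 → ℝ) :=
  {p | (∀ i, p i ∈ Set.Icc (0:ℝ) 1) ∧ ∑ i, p i = 1}

/-- The measure `ν_p̄ = p₁ δ_0 + p₂ δ_{1/2} + p₃ δ_1`. -/
def nuMeasure (p : Fin 3 → ℝ) : Measure ℝ :=
  ∑ j, ENNReal.ofReal (p j) • Measure.dirac (theFixedPts j)

/-! ## Branches -/

/-- cubic coefficient of the branches -/
def kap : Fin 3 → ℝ := ![18, 72, 18]

/-- the three polynomial branches, extended to the line -/
def fb (a : Fin 3) (x : ℝ) : ℝ := x + kap a * (x - theFixedPts a) ^ 3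

/-- the quadratic form in difference quotients of cubes -/
def Qf (u v : ℝ) : ℝ := u ^ 2 + u * v + v ^ 2

lemma Qf_nonneg (u v : ℝ) : 0 ≤ Qf u v := by
  unfold Qf; nlinarith [sq_nonneg (u + v), sq_nonneg u, sq_nonneg v]

lemma kap_pos (a : Fin 3) : 0 < kap a := by fin_cases a <;> simp [kap]

lemma kap_ge (a : Fin 3) : 18 ≤ kap a := by fin_cases a <;> norm_num [kap]

lemma kap_le (a : Fin 3) : kap a ≤ 72 := by fin_cases a <;> norm_num [kap]

lemma fb_diff (a : Fin 3) (x y : ℝ) :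
    fb a y - fb a x = (y - x) * (1 + kap a * Qf (x - theFixedPts a) (y - theFixedPts a)) := by
  unfold fb Qf; ring

lemma one_le_D (a : Fin 3) (u v : ℝ) : 1 ≤ 1 + kap a * Qf u v := by
  have := mul_nonneg (kap_pos a).le (Qf_nonneg u v); linarith

lemma fb_strictMono (a : Fin 3) : StrictMono (fb a) := by
  intro x y hxy
  have h := fb_diff a x y
  have h1 := one_le_D a (x - theFixedPts a) (y - theFixedPts a)
  have : 0 < fb a y - fb a x := by rw [h]; apply mul_pos <;> linarith
  linarith

lemma fb_continuous (a : Fin 3) : Continuous (fb a) := by unfold fb; fun_prop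

lemma fb_surj (a : Fin 3) : Function.Surjective (fb a) := by
  intro y
  apply mem_range_of_exists_le_of_exists_ge (fb_continuous a)
  · refine ⟨theFixedPts a - |y - theFixedPts a|, ?_⟩
    unfold fb
    have h1 : 0 ≤ kap a * |y - theFixedPts a| ^ 3 := mul_nonneg (kap_pos a).le (by positivity)
    have h2 := neg_abs_le (y - theFixedPts a)
    have h3 : theFixedPts a - |y - theFixedPts a| - theFixedPts a = - |y - theFixedPts a| := by ring
    rw [h3, neg_pow]; linarith
  · refine ⟨theFixedPts a + |y - theFixedPts a|, ?_⟩
    unfold fb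
    have h1 : 0 ≤ kap a * |y - theFixedPts a| ^ 3 := mul_nonneg (kap_pos a).le (by positivity)
    have h2 := le_abs_self (y - theFixedPts a)
    have h3 : theFixedPts a + |y - theFixedPts a| - theFixedPts a = |y - theFixedPts a| := by ring
    rw [h3]; linarith

/-- inverse branches -/
def gi (a : Fin 3) (y : ℝ) : ℝ := Function.surjInv (fb_surj a) y

lemma fb_gi (a : Fin 3) (y : ℝ) : fb a (gi a y) = y := Function.surjInv_eq _ _

lemma gi_fb (a : Fin 3) (x : ℝ) : gi a (fb a x) = x := (fb_strictMono a).injective (fb_gi a _)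

lemma gi_strictMono (a : Fin 3) : StrictMono (gi a) := by
  intro x y hxy
  by_contra h
  push Not at h
  have := (fb_strictMono a).monotone h
  rw [fb_gi, fb_gi] at this; linarith

lemma gi_diff (a : Fin 3) (x y : ℝ) :
    y - x = (gi a y - gi a x) *
      (1 + kap a * Qf (gi a x - theFixedPts a) (gi a y - theFixedPts a)) := by
  rw [← fb_diff, fb_gi, fb_gi]

lemma gi_lip (a : Fin 3) {x y : ℝ} (h : x ≤ y) : gi a y - gi a x ≤ y - x := by
  have h1 := gi_diff a x y
  have h2 := (gi_strictMono a).monotone h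
  have h3 := one_le_D a (gi a x - theFixedPts a) (gi a y - theFixedPts a)
  nlinarith

lemma gi_abs_lip (a : Fin 3) (x y : ℝ) : |gi a y - gi a x| ≤ |y - x| := by
  have h1 := gi_diff a x y
  have h3 := one_le_D a (gi a x - theFixedPts a) (gi a y - theFixedPts a)
  conv_rhs => rw [h1]
  rw [abs_mul]
  have h4 := le_abs_self (1 + kap a * Qf (gi a x - theFixedPts a) (gi a y - theFixedPts a))
  nlinarith [abs_nonneg (gi a y - gi a x)]

lemma gi_continuous (a : Fin 3) : Continuous (gi a) := by
  have : LipschitzWith 1 (gi a) := by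
    apply LipschitzWith.of_dist_le_mul
    intro x y
    rw [Real.dist_eq, Real.dist_eq]
    simpa using gi_abs_lip a y x
  exact this.continuous

lemma gi_zero (a : Fin 3) : gi a 0 = (a.val : ℝ) / 3 := by
  have h : fb a ((a.val : ℝ) / 3) = 0 := by
    fin_cases a <;> norm_num [fb, kap, theFixedPts]
  rw [← gi_fb a ((a.val : ℝ) / 3), h]

lemma gi_one (a : Fin 3) : gi a 1 = ((a.val : ℝ) + 1) / 3 := by
  have h : fb a (((a.val : ℝ) + 1) / 3) = 1 := by
    fin_cases a <;> norm_num [fb, kap, theFixedPts]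
  rw [← gi_fb a (((a.val : ℝ) + 1) / 3), h]

lemma gi_pt (a : Fin 3) : gi a (theFixedPts a) = theFixedPts a := by
  have h : fb a (theFixedPts a) = theFixedPts a := by simp [fb]
  conv_lhs => rw [← h]
  rw [gi_fb]

lemma pt_mem (a : Fin 3) : theFixedPts a ∈ Icc (0:ℝ) 1 := by
  fin_cases a <;> norm_num [theFixedPts]

lemma val_le (a : Fin 3) : (a.val : ℝ) ≤ 2 := by
  have := a.isLt; exact_mod_cast (by omega : a.val ≤ 2)

lemma gi_mem (a : Fin 3) {x : ℝ} (hx : x ∈ Icc (0:ℝ) 1) :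
    gi a x ∈ Icc ((a.val : ℝ) / 3) (((a.val : ℝ) + 1) / 3) := by
  rw [← gi_zero, ← gi_one]
  exact ⟨(gi_strictMono a).monotone hx.1, (gi_strictMono a).monotone hx.2⟩

lemma gi_mem_Ioo (a : Fin 3) {x : ℝ} (hx : x ∈ Ioo (0:ℝ) 1) :
    gi a x ∈ Ioo ((a.val : ℝ) / 3) (((a.val : ℝ) + 1) / 3) := by
  rw [← gi_zero, ← gi_one]
  exact ⟨(gi_strictMono a) hx.1, (gi_strictMono a) hx.2⟩

lemma gi_mem01 (a : Fin 3) {x : ℝ} (hx : x ∈ Icc (0:ℝ) 1) : gi a x ∈ Icc (0:ℝ) 1 := by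
  have h := gi_mem a hx
  have h2 := val_le a
  have h3 : (0:ℝ) ≤ a.val := by positivity
  constructor <;> linarith [h.1, h.2]

lemma gi_mem01o (a : Fin 3) {x : ℝ} (hx : x ∈ Ioo (0:ℝ) 1) : gi a x ∈ Ioo (0:ℝ) 1 := by
  have h := gi_mem_Ioo a hx
  have h2 := val_le a
  have h3 : (0:ℝ) ≤ a.val := by positivity
  constructor <;> linarith [h.1, h.2]

lemma theMap_gi (a : Fin 3) {x : ℝ} (hx : x ∈ Ioo (0:ℝ) 1) : theMap (gi a x) = x := by
  have h := gi_mem_Ioo a hx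
  have h2 := fb_gi a x
  generalize gi a x = z at h h2
  rw [← h2]
  unfold theMap fb
  fin_cases a
  · norm_num at h
    rw [if_pos (by linarith [h.2])]; norm_num [kap, theFixedPts]
  · norm_num at h
    rw [if_neg (by linarith [h.1]), if_pos (by linarith [h.2])]; norm_num [kap, theFixedPts]
  · norm_num at h
    rw [if_neg (by linarith [h.1]), if_neg (by linarith [h.1])]; norm_num [kap, theFixedPts]

lemma abs_sub_pt (a : Fin 3) {z : ℝ} (h : z ∈ Icc ((a.val : ℝ) / 3) (((a.val : ℝ) + 1) / 3)) :
    kap a * (z - theFixedPts a) ^ 2 ≤ 2 := by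
  obtain ⟨h1, h2⟩ := h
  fin_cases a <;> norm_num [kap, theFixedPts] at * <;> nlinarith

lemma D_le (a : Fin 3) {x y : ℝ} (hx : x ∈ Icc ((a.val : ℝ) / 3) (((a.val : ℝ) + 1) / 3))
    (hy : y ∈ Icc ((a.val : ℝ) / 3) (((a.val : ℝ) + 1) / 3)) :
    1 + kap a * Qf (x - theFixedPts a) (y - theFixedPts a) ≤ 7 := by
  have h1 := abs_sub_pt a hx
  have h2 := abs_sub_pt a hy
  have h3 := kap_pos a
  unfold Qf
  nlinarith [mul_nonneg h3.le (sq_nonneg ((x - theFixedPts a) - (y - theFixedPts a)))]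

lemma gi_low (a : Fin 3) {x y : ℝ} (hx : x ∈ Icc (0:ℝ) 1) (hy : y ∈ Icc (0:ℝ) 1) (h : x ≤ y) :
    (y - x) / 7 ≤ gi a y - gi a x := by
  have h1 := gi_diff a x y
  have h2 := D_le a (gi_mem a hx) (gi_mem a hy)
  have h3 := (gi_strictMono a).monotone h
  nlinarith

/-- variation of the difference quotient on a subinterval of the branch domain -/
lemma D_var (a : Fin 3) {x y p q h : ℝ}
    (hx : x ∈ Icc p q) (hy : y ∈ Icc p q) (hp : (a.val : ℝ) / 3 ≤ p)
    (hq : q ≤ ((a.val : ℝ) + 1) / 3) (hpq : q - p ≤ h) :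
    |kap a * Qf (x - theFixedPts a) (y - theFixedPts a) -
      kap a * Qf (p - theFixedPts a) (q - theFixedPts a)| ≤ 72 * h := by
  obtain ⟨hx1, hx2⟩ := hx
  obtain ⟨hy1, hy2⟩ := hy
  have key : ∀ u v r t A d : ℝ, |u| ≤ A → |v| ≤ A → |r| ≤ A → |t| ≤ A → |u - r| ≤ d → |v - t| ≤ d →
      |Qf u v - Qf r t| ≤ 6 * A * d := by
    intro u v r t A d hu hv hr ht h1 h2
    have e : Qf u v - Qf r t = (u - r) * (u + r + v) + (v - t) * (v + t + r) := by
      unfold Qf; ring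
    have hA : 0 ≤ A := (abs_nonneg _).trans hu
    have hd : 0 ≤ d := (abs_nonneg _).trans h1
    rw [e]
    have b1 : |u + r + v| ≤ 3 * A := by
      rw [abs_le] at *; constructor <;> linarith [hu.1, hu.2, hv.1, hv.2, hr.1, hr.2]
    have b2 : |v + t + r| ≤ 3 * A := by
      rw [abs_le] at *; constructor <;> linarith [ht.1, ht.2, hv.1, hv.2, hr.1, hr.2]
    calc _ ≤ |(u - r) * (u + r + v)| + |(v - t) * (v + t + r)| := abs_add_le _ _
      _ = |u - r| * |u + r + v| + |v - t| * |v + t + r| := by rw [abs_mul, abs_mul]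
      _ ≤ d * (3 * A) + d * (3 * A) := by gcongr
      _ = _ := by ring
  have hd : |x - theFixedPts a - (p - theFixedPts a)| ≤ h := by
    rw [abs_le]; constructor <;> linarith
  have hd2 : |y - theFixedPts a - (q - theFixedPts a)| ≤ h := by
    rw [abs_le]; constructor <;> linarith
  have hh : 0 ≤ h := (abs_nonneg _).trans hd
  rw [← mul_sub, abs_mul, abs_of_pos (kap_pos a)]
  have hb : ∀ z, p ≤ z → z ≤ q → |z - theFixedPts a| ≤ 12 / kap a := by
    intro z h1 h2
    rw [abs_le]
    fin_cases a <;> norm_num [kap, theFixedPts] at * <;> constructor <;> linarith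
  have := key _ _ _ _ (12 / kap a) h (hb x hx1 hx2) (hb y hy1 hy2)
    (hb p le_rfl (by linarith)) (hb q (by linarith) le_rfl) hd hd2
  have h0 := kap_pos a
  calc _ ≤ kap a * (6 * (12 / kap a) * h) := by gcongr
    _ = 72 * h := by field_simp; ring

/-- off-diagonal contraction -/
lemma gi_half (a b : Fin 3) (hab : a ≠ b) {x y : ℝ}
    (hx : x ∈ Icc ((b.val : ℝ) / 3) (((b.val : ℝ) + 1) / 3))
    (hy : y ∈ Icc ((b.val : ℝ) / 3) (((b.val : ℝ) + 1) / 3)) (h : x ≤ y) :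
    gi a y - gi a x ≤ (y - x) / 2 := by
  have h1 := gi_diff a x y
  have h3 := (gi_strictMono a).monotone h
  have key : 2 ≤ 1 + kap a * Qf (gi a x - theFixedPts a) (gi a y - theFixedPts a) := by
    have e1 := fb_gi a x
    have e2 := fb_gi a y
    generalize gi a x = X at *
    generalize gi a y = Y at *
    obtain ⟨hx1, hx2⟩ := hx
    obtain ⟨hy1, hy2⟩ := hy
    have hU : ∀ z : ℝ, (1/3 : ℝ) ≤ z + 18 * z ^ 3 → 19/100 ≤ z := by
      intro z hz; by_contra hc; push Not at hc
      nlinarith [mul_nonneg (sub_nonneg.2 hc.le) (add_nonneg (sq_nonneg (z + 19/200)) (sq_nonneg z))]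
    have hM : ∀ z : ℝ, (1/6 : ℝ) ≤ z + 72 * z ^ 3 → 9/100 ≤ z := by
      intro z hz; by_contra hc; push Not at hc
      nlinarith [mul_nonneg (sub_nonneg.2 hc.le) (add_nonneg (sq_nonneg (z + 9/200)) (sq_nonneg z))]
    have pos : ∀ c z w : ℝ, 0 ≤ c → c ≤ z → c ≤ w → 3 * c ^ 2 ≤ Qf z w := by
      intro c z w h0 h1 h2; unfold Qf; nlinarith
    have ng : ∀ z w : ℝ, Qf (-z) (-w) = Qf z w := by intro z w; unfold Qf; ring
    unfold fb at e1 e2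
    fin_cases a <;> fin_cases b <;> norm_num [kap, theFixedPts] at *
    · have := pos (19/100) X Y (by norm_num) (hU X (by linarith)) (hU Y (by linarith)); norm_num at this; linarith
    · have := pos (19/100) X Y (by norm_num) (hU X (by linarith)) (hU Y (by linarith)); norm_num at this; linarith
    · have := pos (9/100) (-(X-1/2)) (-(Y-1/2)) (by norm_num) (hM _ (by nlinarith)) (hM _ (by nlinarith))
      rw [ng] at this; norm_num at this; linarith
    · have := pos (9/100) (X-1/2) (Y-1/2) (by norm_num) (hM _ (by linarith)) (hM _ (by linarith))
      norm_num at this; linarith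
    · have := pos (19/100) (-(X-1)) (-(Y-1)) (by norm_num) (hU _ (by nlinarith)) (hU _ (by nlinarith))
      rw [ng] at this; norm_num at this; linarith
    · have := pos (19/100) (-(X-1)) (-(Y-1)) (by norm_num) (hU _ (by nlinarith)) (hU _ (by nlinarith))
      rw [ng] at this; norm_num at this; linarith
  nlinarith

/-- length decay in one step -/
lemma gi_decay (a : Fin 3) {x y : ℝ} (h : x ≤ y) :
    (gi a y - gi a x) * (1 + 9 / 2 * (gi a y - gi a x) ^ 2) ≤ y - x := by
  have h1 := gi_diff a x y
  have h3 := (gi_strictMono a).monotone h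
  rw [h1]
  apply mul_le_mul_of_nonneg_left _ (by linarith)
  have h4 := kap_ge a
  have : (gi a y - gi a x) ^ 2 / 4 ≤ Qf (gi a x - theFixedPts a) (gi a y - theFixedPts a) := by
    unfold Qf
    nlinarith [sq_nonneg ((gi a x - theFixedPts a) + (gi a y - theFixedPts a))]
  nlinarith [sq_nonneg (gi a y - gi a x)]

/-! ## Words and distortion -/

/-- composition of inverse branches along a word -/
def gw : List (Fin 3) → ℝ → ℝ
  | [], x => x
  | a :: v, x => gi a (gw v x)

@[simp] lemma gw_nil (x : ℝ) : gw [] x = x := rfl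
@[simp] lemma gw_cons (a : Fin 3) (v : List (Fin 3)) (x : ℝ) : gw (a :: v) x = gi a (gw v x) := rfl

lemma gw_append (u v : List (Fin 3)) (x : ℝ) : gw (u ++ v) x = gw u (gw v x) := by
  induction u with
  | nil => rfl
  | cons a u ih => simp [ih]

lemma gw_strictMono (w : List (Fin 3)) : StrictMono (gw w) := by
  induction w with
  | nil => exact strictMono_id
  | cons a v ih => exact (gi_strictMono a).comp ih

lemma gw_mono (w : List (Fin 3)) : Monotone (gw w) := (gw_strictMono w).monotone

lemma gw_continuous (w : List (Fin 3)) : Continuous (gw w) := by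
  induction w with
  | nil => exact continuous_id
  | cons a v ih => exact (gi_continuous a).comp ih

lemma gw_mem01 (w : List (Fin 3)) {x : ℝ} (hx : x ∈ Icc (0:ℝ) 1) : gw w x ∈ Icc (0:ℝ) 1 := by
  induction w with
  | nil => exact hx
  | cons a v ih => exact gi_mem01 a ih

lemma gw_mem01o (w : List (Fin 3)) {x : ℝ} (hx : x ∈ Ioo (0:ℝ) 1) : gw w x ∈ Ioo (0:ℝ) 1 := by
  induction w with
  | nil => exact hx
  | cons a v ih => exact gi_mem01o a ih

lemma zero_mem01 : (0:ℝ) ∈ Icc (0:ℝ) 1 := by simp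
lemma one_mem01 : (1:ℝ) ∈ Icc (0:ℝ) 1 := by simp

lemma gw_lip (w : List (Fin 3)) {x y : ℝ} (h : x ≤ y) : gw w y - gw w x ≤ y - x := by
  induction w with
  | nil => simp
  | cons a v ih => exact (gi_lip a (gw_mono v h)).trans ih

lemma gw_low (w : List (Fin 3)) {x y : ℝ} (hx : x ∈ Icc (0:ℝ) 1) (hy : y ∈ Icc (0:ℝ) 1)
    (h : x ≤ y) : (1 / 7) ^ w.length * (y - x) ≤ gw w y - gw w x := by
  induction w with
  | nil => simp
  | cons a v ih =>
    have := gi_low a (gw_mem01 v hx) (gw_mem01 v hy) (gw_mono v h)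
    simp only [gw_cons, List.length_cons, pow_succ]
    linarith

/-- length of a cylinder -/
def len (w : List (Fin 3)) : ℝ := gw w 1 - gw w 0

lemma len_pos (w : List (Fin 3)) : 0 < len w := by
  have := gw_strictMono w (zero_lt_one (α := ℝ)); unfold len; linarith

lemma len_le_one (w : List (Fin 3)) : len w ≤ 1 := by
  have := gw_lip w (zero_le_one (α := ℝ)); unfold len; linarith

lemma len_cons_third (a : Fin 3) (v : List (Fin 3)) : len (a :: v) ≤ 1 / 3 := by
  have h0 := gi_mem a (gw_mem01 v zero_mem01)
  have h1 := gi_mem a (gw_mem01 v one_mem01)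
  unfold len; simp only [gw_cons]; linarith [h0.1, h1.2]

lemma len_split (v : List (Fin 3)) : len v = ∑ a : Fin 3, len (v ++ [a]) := by
  simp only [len, gw_append, gw_cons, gw_nil, Fin.sum_univ_three, gi_zero, gi_one]
  norm_num

lemma len_append_le (v u : List (Fin 3)) : len (v ++ u) ≤ len u := by
  simp only [len, gw_append]
  exact gw_lip v (gw_mono u zero_le_one)

lemma len_decay (w : List (Fin 3)) : ((w.length : ℝ) + 1) * len w ^ 2 ≤ 1 := by
  induction w with
  | nil => simp [len]
  | cons a v ih =>
    have h1 := gi_decay a (gw_mono v zero_le_one)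
    have h2 := len_cons_third a v
    have h3 := len_pos (a :: v)
    change len (a :: v) * (1 + 9 / 2 * (len (a :: v)) ^ 2) ≤ len v at h1
    generalize len (a :: v) = L at *
    generalize len v = h at *
    have hn : (0:ℝ) ≤ v.length := by positivity
    simp only [List.length_cons]
    push_cast
    generalize (v.length : ℝ) = n at *
    have h4 : L ^ 2 * (1 + 9 * L ^ 2) ≤ h ^ 2 := by
      have : (L * (1 + 9 / 2 * L ^ 2)) ^ 2 ≤ h ^ 2 := by
        apply pow_le_pow_left₀ _ h1; positivity
      nlinarith [pow_pos h3 6]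
    have h5 : (n + 1) * (L ^ 2 * (1 + 9 * L ^ 2)) ≤ 1 :=
      (mul_le_mul_of_nonneg_left h4 (by linarith)).trans ih
    have ht : L ^ 2 ≤ 1 / 9 := by nlinarith
    have ht0 : 0 < L ^ 2 := by positivity
    generalize L ^ 2 = t at *
    by_contra hc
    push Not at hc
    have h6 : 1 - t < (n + 1) * t := by linarith
    nlinarith [mul_lt_mul_of_pos_left h6 ht0]

/-- sum of lengths along the orbit of a cylinder -/
def Ssum : List (Fin 3) → ℝ
  | [] => 0
  | a :: v => len (a :: v) + Ssum v

lemma Ssum_nonneg (w : List (Fin 3)) : 0 ≤ Ssum w := by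
  induction w with
  | nil => simp [Ssum]
  | cons a v ih => simp only [Ssum]; linarith [len_pos (a :: v)]

lemma D_exp {D1 D0 h : ℝ} (h0 : 1 ≤ D0) (hh : 0 ≤ h) (hd : D1 - D0 ≤ 72 * h) :
    D1 ≤ D0 * Real.exp (72 * h) := by
  have := Real.add_one_le_exp (72 * h)
  nlinarith

lemma distortion (w : List (Fin 3)) {x y : ℝ} (hx : x ∈ Icc (0:ℝ) 1) (hy : y ∈ Icc (0:ℝ) 1)
    (h : x ≤ y) :
    (y - x) * len w * Real.exp (-(72 * Ssum w)) ≤ gw w y - gw w x ∧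
    gw w y - gw w x ≤ (y - x) * len w * Real.exp (72 * Ssum w) := by
  induction w with
  | nil => simp [len, Ssum]
  | cons a v ih =>
    have e1 := gi_diff a (gw v x) (gw v y)
    have e0 := gi_diff a (gw v 0) (gw v 1)
    have o1 := one_le_D a (gi a (gw v x) - theFixedPts a) (gi a (gw v y) - theFixedPts a)
    have o0 := one_le_D a (gi a (gw v 0) - theFixedPts a) (gi a (gw v 1) - theFixedPts a)
    have m := gw_mono (a :: v)
    have var := D_var a (x := gi a (gw v x)) (y := gi a (gw v y)) (p := gi a (gw v 0))
      (q := gi a (gw v 1)) (h := len (a :: v)) ⟨m hx.1, m hx.2⟩ ⟨m hy.1, m hy.2⟩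
      (gi_mem a (gw_mem01 v zero_mem01)).1 (gi_mem a (gw_mem01 v one_mem01)).2 le_rfl
    rw [abs_le] at var
    have hl := (len_pos (a :: v))
    change len v = len (a :: v) * _ at e0
    have hXY : 0 ≤ gi a (gw v y) - gi a (gw v x) := by have := m h; simp only [gw_cons] at this; linarith
    simp only [gw_cons, Ssum]
    set D1 := 1 + kap a * Qf (gi a (gw v x) - theFixedPts a) (gi a (gw v y) - theFixedPts a)
    set D0 := 1 + kap a * Qf (gi a (gw v 0) - theFixedPts a) (gi a (gw v 1) - theFixedPts a)
    have d1 : D1 ≤ D0 * Real.exp (72 * len (a :: v)) := D_exp o0 hl.le (by linarith)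
    have d2 : D0 ≤ D1 * Real.exp (72 * len (a :: v)) := D_exp o1 hl.le (by linarith)
    obtain ⟨i1, i2⟩ := ih
    rw [e1, e0] at i1 i2
    generalize gi a (gw v y) - gi a (gw v x) = d at *
    generalize len (a :: v) = L at *
    have hyx : 0 ≤ y - x := by linarith
    generalize y - x = t at *
    have E1 : Real.exp (-(72 * (L + Ssum v))) = Real.exp (-(72 * Ssum v)) * Real.exp (-(72 * L)) := by
      rw [← Real.exp_add]; ring_nf
    have E2 : Real.exp (72 * (L + Ssum v)) = Real.exp (72 * Ssum v) * Real.exp (72 * L) := by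
      rw [← Real.exp_add]; ring_nf
    have E3 : Real.exp (72 * L) * Real.exp (-(72 * L)) = 1 := by
      rw [← Real.exp_add]; simp
    rw [E1, E2]
    have p1 := Real.exp_pos (72 * L)
    have p2 := Real.exp_pos (-(72 * L))
    have p3 := Real.exp_pos (72 * Ssum v)
    have p4 := Real.exp_pos (-(72 * Ssum v))
    generalize Real.exp (72 * L) = a1 at *
    generalize Real.exp (-(72 * L)) = a2 at *
    generalize Real.exp (72 * Ssum v) = a3 at *
    generalize Real.exp (-(72 * Ssum v)) = a4 at *
    have hD0 : 0 < D0 := by linarith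
    have hD1 : 0 < D1 := by linarith
    constructor
    · have h1 : (t * L * a4) * D0 ≤ (d * a1) * D0 := by
        calc (t * L * a4) * D0 = t * (L * D0) * a4 := by ring
          _ ≤ d * D1 := i1
          _ ≤ d * (D0 * a1) := by gcongr
          _ = _ := by ring
      have h2 := le_of_mul_le_mul_right h1 hD0
      calc t * L * (a4 * a2) = (t * L * a4) * a2 := by ring
        _ ≤ d * a1 * a2 := by gcongr
        _ = d * (a1 * a2) := by ring
        _ = d := by rw [E3, mul_one]
    · have h1 : d * D1 ≤ (t * L * a3 * a1) * D1 := by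
        calc d * D1 ≤ t * (L * D0) * a3 := i2
          _ ≤ t * (L * (D1 * a1)) * a3 := by gcongr
          _ = _ := by ring
      have h2 := le_of_mul_le_mul_right h1 hD1
      linarith

lemma gw_rep_succ (a : Fin 3) (n : ℕ) (x : ℝ) :
    gw (List.replicate (n + 1) a) x = gw (List.replicate n a) (gi a x) := by
  rw [List.replicate_succ', gw_append]; rfl

lemma Ssum_run (a b : Fin 3) (hab : a ≠ b) (n : ℕ) : Ssum (List.replicate n a ++ [b]) ≤ 1 := by
  have hsucc : ∀ n, Ssum (List.replicate (n + 1) a ++ [b]) =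
      (gw (List.replicate (n + 1) a) (gi b 1) - gw (List.replicate (n + 1) a) (gi b 0)) +
        Ssum (List.replicate n a ++ [b]) := by
    intro n
    rw [List.replicate_succ, List.cons_append]
    simp only [Ssum, len, gw_cons, gw_append, gw_nil]
  have h0 : Ssum (List.replicate 0 a ++ [b]) = gi b 1 - gi b 0 := by
    simp [Ssum, len]
  have hb1 := (gi_mem01 b one_mem01).2
  have hb0 := (gi_mem01 b zero_mem01).1
  rcases lt_or_gt_of_ne hab with h | h
  · have hle : gi a 1 ≤ gi b 0 := by
      rw [gi_one, gi_zero]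
      have : a.val + 1 ≤ b.val := h
      have : (a.val : ℝ) + 1 ≤ b.val := by exact_mod_cast this
      linarith
    have key : ∀ n, Ssum (List.replicate n a ++ [b]) ≤ 1 - gw (List.replicate (n + 1) a) 1 := by
      intro n
      induction n with
      | zero => rw [h0]; simp; linarith
      | succ n ih =>
        rw [hsucc, gw_rep_succ a (n + 1)]
        have m1 := gw_mono (List.replicate (n + 1) a) hb1
        have m2 := gw_mono (List.replicate (n + 1) a) hle
        linarith
    have := (gw_mem01 (List.replicate (n + 1) a) one_mem01).1
    linarith [key n]
  · have hle : gi b 1 ≤ gi a 0 := by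
      rw [gi_one, gi_zero]
      have : b.val + 1 ≤ a.val := h
      have : (b.val : ℝ) + 1 ≤ a.val := by exact_mod_cast this
      linarith
    have key : ∀ n, Ssum (List.replicate n a ++ [b]) ≤ gw (List.replicate (n + 1) a) 0 := by
      intro n
      induction n with
      | zero => rw [h0]; simp; linarith
      | succ n ih =>
        rw [hsucc, gw_rep_succ a (n + 1)]
        have m1 := gw_mono (List.replicate (n + 1) a) hb0
        have m2 := gw_mono (List.replicate (n + 1) a) hle
        linarith
    have := (gw_mem01 (List.replicate (n + 1) a) zero_mem01).2
    linarith [key n]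

/-- distortion constant for runs -/
def Acst : ℝ := 7 * Real.exp 72

lemma Acst_pos : 0 < Acst := by unfold Acst; positivity

lemma Ssum_run_append (a b : Fin 3) (hab : a ≠ b) (u : List (Fin 3)) (n : ℕ) :
    Ssum (List.replicate n a ++ b :: u) ≤
      Ssum (b :: u) + Acst * len (b :: u) * Ssum (List.replicate n a ++ [b]) := by
  induction n with
  | zero =>
    have := Ssum_nonneg [b]
    have h1 := len_pos (b :: u)
    have h2 := Acst_pos
    simp only [List.replicate_zero, List.nil_append]
    nlinarith [mul_nonneg (mul_nonneg h2.le h1.le) this]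
  | succ n ih =>
    rw [List.replicate_succ, List.cons_append, List.cons_append]
    simp only [Ssum]
    have h1 := (distortion (a :: (List.replicate n a ++ [b])) (gw_mem01 u zero_mem01)
      (gw_mem01 u one_mem01) (gw_mono u zero_le_one)).2
    have h2 : len (a :: (List.replicate n a ++ b :: u)) =
        gw (a :: (List.replicate n a ++ [b])) (gw u 1) -
          gw (a :: (List.replicate n a ++ [b])) (gw u 0) := by
      simp [len, gw_append]
    have h3 : len u ≤ 7 * len (b :: u) := by
      have := gi_low b (gw_mem01 u zero_mem01) (gw_mem01 u one_mem01) (gw_mono u zero_le_one)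
      simp only [len, gw_cons]; linarith
    have h4 : Real.exp (72 * Ssum (a :: (List.replicate n a ++ [b]))) ≤ Real.exp 72 := by
      apply Real.exp_le_exp.2
      have := Ssum_run a b hab (n + 1)
      rw [List.replicate_succ, List.cons_append] at this
      linarith
    rw [← h2] at h1
    change _ ≤ len u * _ * _ at h1
    have h5 : len (a :: (List.replicate n a ++ b :: u)) ≤
        Acst * len (b :: u) * len (a :: (List.replicate n a ++ [b])) := by
      refine h1.trans ?_
      have l0 := len_pos (a :: (List.replicate n a ++ [b]))
      have l1 := len_pos u
      have l2 := len_pos (b :: u)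
      calc _ ≤ (7 * len (b :: u)) * len (a :: (List.replicate n a ++ [b])) * Real.exp 72 := by
            gcongr
        _ = _ := by unfold Acst; ring
    simp only [Ssum] at ih
    linarith

lemma len_cons_half (c d : Fin 3) (hcd : c ≠ d) (u : List (Fin 3)) :
    len (c :: d :: u) ≤ len (d :: u) / 2 :=
  gi_half c d hcd (gi_mem d (gw_mem01 u zero_mem01)) (gi_mem d (gw_mem01 u one_mem01))
    (gw_mono (d :: u) zero_le_one)

lemma len_run_half (c d : Fin 3) (hcd : c ≠ d) (u : List (Fin 3)) (n : ℕ) :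
    len (List.replicate (n + 1) c ++ d :: u) ≤ len (d :: u) / 2 := by
  rw [List.replicate_succ', List.append_assoc]
  exact (len_append_le _ _).trans (len_cons_half c d hcd u)

lemma good_struct (v : List (Fin 3)) (a b : Fin 3) (hab : a ≠ b) :
    ∃ (n : ℕ) (c d : Fin 3) (u : List (Fin 3)), c ≠ d ∧
      v ++ [a, b] = List.replicate (n + 1) c ++ d :: u ∧
      Ssum (d :: u) + 2 * Acst * len (d :: u) ≤ 1 + 2 * Acst := by
  induction v with
  | nil =>
    refine ⟨0, a, b, [], hab, rfl, ?_⟩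
    have h1 := len_le_one [b]
    simp only [Ssum]
    nlinarith [Acst_pos]
  | cons e v ih =>
    obtain ⟨n, c, d, u, hcd, hw, hS⟩ := ih
    by_cases hec : e = c
    · subst hec
      exact ⟨n + 1, e, d, u, hcd, by rw [List.cons_append, hw]; rfl, hS⟩
    · refine ⟨0, e, c, List.replicate n c ++ d :: u, hec, by rw [List.cons_append, hw]; rfl, ?_⟩
      rw [← List.cons_append, ← List.replicate_succ]
      have h1 := Ssum_run_append c d hcd u (n + 1)
      have h2 := len_run_half c d hcd u n
      have h3 := Ssum_run c d hcd (n + 1)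
      have h4 := mul_pos Acst_pos (len_pos (d :: u))
      have h5 := Acst_pos
      nlinarith

lemma Ssum_good (v : List (Fin 3)) (a b : Fin 3) (hab : a ≠ b) :
    Ssum (v ++ [a, b]) ≤ 1 + 2 * Acst := by
  obtain ⟨n, c, d, u, hcd, hw, hS⟩ := good_struct v a b hab
  rw [hw]
  have h1 := Ssum_run_append c d hcd u (n + 1)
  have h3 := Ssum_run c d hcd (n + 1)
  have h4 := mul_pos Acst_pos (len_pos (d :: u))
  nlinarith

/-! ## Lower Lipschitz constants -/

/-- optimal lower Lipschitz constant of `gw w` on `[0,1]` -/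
def mw (w : List (Fin 3)) : ℝ :=
  sInf {r | ∃ x ∈ Icc (0:ℝ) 1, ∃ y ∈ Icc (0:ℝ) 1, x < y ∧ r = (gw w y - gw w x) / (y - x)}

lemma mw_bdd (w : List (Fin 3)) : BddBelow
    {r | ∃ x ∈ Icc (0:ℝ) 1, ∃ y ∈ Icc (0:ℝ) 1, x < y ∧ r = (gw w y - gw w x) / (y - x)} := by
  refine ⟨0, ?_⟩
  rintro r ⟨x, _, y, _, hxy, rfl⟩
  have := gw_strictMono w hxy
  apply div_nonneg <;> linarith

lemma mw_le (w : List (Fin 3)) {x y : ℝ} (hx : x ∈ Icc (0:ℝ) 1) (hy : y ∈ Icc (0:ℝ) 1)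
    (h : x ≤ y) : mw w * (y - x) ≤ gw w y - gw w x := by
  rcases h.eq_or_lt with rfl | h
  · simp
  · rw [← le_div_iff₀ (by linarith)]
    exact csInf_le (mw_bdd w) ⟨x, hx, y, hy, h, rfl⟩

lemma le_mw (w : List (Fin 3)) {c : ℝ} (h : ∀ x ∈ Icc (0:ℝ) 1, ∀ y ∈ Icc (0:ℝ) 1, x < y →
    c * (y - x) ≤ gw w y - gw w x) : c ≤ mw w := by
  apply le_csInf
  · exact ⟨_, 0, zero_mem01, 1, one_mem01, zero_lt_one, rfl⟩
  · rintro r ⟨x, hx, y, hy, hxy, rfl⟩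
    rw [le_div_iff₀ (by linarith)]
    exact h x hx y hy hxy

lemma mw_low (w : List (Fin 3)) : (1 / 7) ^ w.length ≤ mw w :=
  le_mw w fun _ hx _ hy hxy => gw_low w hx hy hxy.le

lemma mw_pos (w : List (Fin 3)) : 0 < mw w := lt_of_lt_of_le (by positivity) (mw_low w)

lemma mw_le_len (w : List (Fin 3)) : mw w ≤ len w := by
  have := mw_le w zero_mem01 one_mem01 zero_le_one
  unfold len; linarith

lemma mw_mul (u v : List (Fin 3)) : mw u * mw v ≤ mw (u ++ v) := by
  apply le_mw
  intro x hx y hy hxy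
  rw [gw_append, gw_append]
  refine le_trans ?_ (mw_le u (gw_mem01 v hx) (gw_mem01 v hy) (gw_mono v hxy.le))
  rw [mul_assoc]
  exact mul_le_mul_of_nonneg_left (mw_le v hx hy hxy.le) (mw_pos u).le

lemma mw_abs (w : List (Fin 3)) {x y : ℝ} (hx : x ∈ Icc (0:ℝ) 1) (hy : y ∈ Icc (0:ℝ) 1) :
    mw w * |x - y| ≤ |gw w x - gw w y| := by
  rcases le_total x y with h | h
  · rw [abs_sub_comm, abs_sub_comm (gw w x), abs_of_nonneg (sub_nonneg.2 h),
      abs_of_nonneg (sub_nonneg.2 (gw_mono w h))]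
    exact mw_le w hx hy h
  · rw [abs_of_nonneg (sub_nonneg.2 h), abs_of_nonneg (sub_nonneg.2 (gw_mono w h))]
    exact mw_le w hy hx h

/-- distortion constant -/
def Kcst : ℝ := Real.exp (-(72 * (1 + 2 * Acst)))

lemma Kcst_pos : 0 < Kcst := Real.exp_pos _

lemma mw_good (v : List (Fin 3)) (a b : Fin 3) (hab : a ≠ b) :
    Kcst * len (v ++ [a, b]) ≤ mw (v ++ [a, b]) := by
  apply le_mw
  intro x hx y hy hxy
  refine le_trans ?_ (distortion _ hx hy hxy.le).1
  have h1 : Kcst ≤ Real.exp (-(72 * Ssum (v ++ [a, b]))) := by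
    apply Real.exp_le_exp.2; linarith [Ssum_good v a b hab]
  have h2 := len_pos (v ++ [a, b])
  have h3 : 0 ≤ y - x := by linarith
  calc _ = (y - x) * len (v ++ [a, b]) * Kcst := by ring
    _ ≤ _ := by gcongr

/-! ## Growth of the partition function -/

/-- all words of length `n` -/
def Wd : ℕ → Finset (List (Fin 3))
  | 0 => {[]}
  | n + 1 => (Finset.univ ×ˢ Wd n).image fun p : Fin 3 × List (Fin 3) => p.1 :: p.2

lemma sumW_succ (n : ℕ) (F : List (Fin 3) → ℝ) :
    ∑ u ∈ Wd (n + 1), F u = ∑ a : Fin 3, ∑ u ∈ Wd n, F (a :: u) := by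
  rw [Wd, Finset.sum_image, Finset.sum_product]
  rintro ⟨a, u⟩ _ ⟨b, v⟩ _ h
  simp at h; simp [h.1, h.2]

lemma length_of_mem (n : ℕ) {w : List (Fin 3)} (h : w ∈ Wd n) : w.length = n := by
  induction n generalizing w with
  | zero => simp [Wd] at h; simp [h]
  | succ n ih =>
    simp only [Wd, Finset.mem_image, Finset.mem_product] at h
    obtain ⟨⟨a, u⟩, ⟨_, hu⟩, rfl⟩ := h
    simp [ih hu]

lemma Wd_nonempty (n : ℕ) : (Wd n).Nonempty := by
  induction n with
  | zero => simp [Wd]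
  | succ n ih =>
    obtain ⟨u, hu⟩ := ih
    exact ⟨0 :: u, by simp only [Wd, Finset.mem_image]; exact ⟨(0, u), by simp [hu], rfl⟩⟩

lemma sumW_one (F : List (Fin 3) → ℝ) : ∑ u ∈ Wd 1, F u = ∑ a : Fin 3, F [a] := by
  rw [sumW_succ]; simp [Wd]

lemma sumW_add (n k : ℕ) (F : List (Fin 3) → ℝ) :
    ∑ u ∈ Wd (n + k), F u = ∑ v ∈ Wd n, ∑ u ∈ Wd k, F (v ++ u) := by
  induction n generalizing F with
  | zero => simp [Wd]
  | succ n ih =>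
    rw [show n + 1 + k = (n + k) + 1 by ring, sumW_succ, sumW_succ]
    apply Finset.sum_congr rfl
    intro a _
    rw [ih]
    simp

lemma sumW_len (n : ℕ) : ∑ v ∈ Wd n, len v = 1 := by
  induction n with
  | zero => simp [Wd, len]
  | succ n ih =>
    rw [sumW_add n 1]
    simp_rw [sumW_one, ← len_split, ih]

/-- partition function -/
def Zf (s : ℝ) (n : ℕ) : ℝ := ∑ w ∈ Wd n, (mw w) ^ s

/-- partition function below a given word -/
def Tf (s : ℝ) (k : ℕ) (w : List (Fin 3)) : ℝ := ∑ u ∈ Wd k, (mw (w ++ u)) ^ s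

lemma Tf_nonneg (s : ℝ) (k : ℕ) (w : List (Fin 3)) : 0 ≤ Tf s k w :=
  Finset.sum_nonneg fun _ _ => Real.rpow_nonneg (mw_pos _).le _

lemma Tf_ge {s : ℝ} (hs : 0 < s) (k : ℕ) (w : List (Fin 3)) : mw w ^ s * Zf s k ≤ Tf s k w := by
  unfold Tf Zf
  rw [Finset.mul_sum]
  apply Finset.sum_le_sum
  intro u _
  rw [← Real.mul_rpow (mw_pos _).le (mw_pos _).le]
  apply Real.rpow_le_rpow (mul_nonneg (mw_pos _).le (mw_pos _).le) (mw_mul w u) hs.le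

lemma Tf_succ (s : ℝ) (k : ℕ) (w : List (Fin 3)) :
    Tf s (k + 1) w = ∑ a : Fin 3, Tf s k (w ++ [a]) := by
  unfold Tf
  rw [sumW_succ]; simp

lemma Zf_low {s : ℝ} (hs : 0 < s) (hs1 : s ≤ 1) (n : ℕ) : (1 / 7) ^ n ≤ Zf s n := by
  obtain ⟨w, hw⟩ := Wd_nonempty n
  have h1 : mw w ^ s ≤ Zf s n :=
    Finset.single_le_sum (f := fun w => mw w ^ s) (fun _ _ => Real.rpow_nonneg (mw_pos _).le _) hw
  have h2 := mw_low w
  rw [length_of_mem n hw] at h2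
  have h3 : mw w ≤ mw w ^ s := by
    conv_lhs => rw [← Real.rpow_one (mw w)]
    exact Real.rpow_le_rpow_of_exponent_ge (mw_pos w) ((mw_le_len w).trans (len_le_one w)) hs1
  linarith

/-- the key splitting estimate -/
lemma Tf_split {s q c lam : ℝ} (hs : 0 < s) (hq : 0 ≤ q) (hc : 0 ≤ c) (hlam : 1 ≤ lam) (N : ℕ) (hN : 1 ≤ N)
    (hgood : ∀ (v : List (Fin 3)) (a b : Fin 3), a ≠ b → N ≤ v.length + 1 →
      q * len (v ++ [a, b]) ≤ mw (v ++ [a, b]) ^ s)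
    (T : ℕ) : ∀ (k : ℕ), T ≤ k → (∀ i < k, c * lam ^ i ≤ Zf s i) →
    ∀ (v : List (Fin 3)) (a : Fin 3), N ≤ v.length + 1 →
      q * c * lam ^ (k - T) * (len (v ++ [a]) - len (v ++ [a] ++ List.replicate T a)) ≤
        Tf s k (v ++ [a]) := by
  induction T with
  | zero => intro k _ _ v a _; simp; exact Tf_nonneg _ _ _
  | succ T ih =>
    intro k hk hZ v a hv
    obtain ⟨k, rfl⟩ : ∃ j, k = j + 1 := ⟨k - 1, by omega⟩
    have ih' := ih k (by omega) (fun i hi => hZ i (by omega)) (v ++ [a]) a (by simp; omega)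
    rw [Tf_succ, len_split (v ++ [a])]
    have e1 : v ++ [a] ++ List.replicate (T + 1) a = v ++ [a] ++ [a] ++ List.replicate T a := by
      rw [List.replicate_succ]; simp
    rw [e1, show k + 1 - (T + 1) = k - T by omega]
    rw [← Finset.add_sum_erase _ _ (Finset.mem_univ a),
      ← Finset.add_sum_erase _ (fun b => Tf s k (v ++ [a] ++ [b])) (Finset.mem_univ a)]
    have h2 : q * c * lam ^ (k - T) * ∑ b ∈ Finset.univ.erase a, len (v ++ [a] ++ [b]) ≤
        ∑ b ∈ Finset.univ.erase a, Tf s k (v ++ [a] ++ [b]) := by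
      rw [Finset.mul_sum]
      apply Finset.sum_le_sum
      intro b hb
      have hab : a ≠ b := (Finset.ne_of_mem_erase hb).symm
      refine le_trans ?_ (Tf_ge hs k _)
      have g := hgood v a b hab hv
      have z := hZ k (by omega)
      have l : lam ^ (k - T) ≤ lam ^ k := pow_le_pow_right₀ hlam (by omega)
      have e2 : v ++ [a] ++ [b] = v ++ [a, b] := by simp
      rw [e2]
      have lp := len_pos (v ++ [a, b])
      calc _ = (q * len (v ++ [a, b])) * (c * lam ^ (k - T)) := by ring
        _ ≤ (mw (v ++ [a, b]) ^ s) * (c * lam ^ k) := by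
          apply mul_le_mul g (mul_le_mul_of_nonneg_left l hc) (by positivity)
          exact Real.rpow_nonneg (mw_pos _).le _
        _ ≤ _ := mul_le_mul_of_nonneg_left z (Real.rpow_nonneg (mw_pos _).le _)
    linarith

lemma growth {s : ℝ} (hs : 0 < s) (hs1 : s < 1) (B : ℝ) : ∃ n, B ≤ Zf s n := by
  -- choice of N
  obtain ⟨N, hN1, hN⟩ : ∃ N : ℕ, 1 ≤ N ∧ 4 ≤ Kcst ^ s * ((N : ℝ)) ^ ((1 - s) / 2) := by
    have h1 : Tendsto (fun N : ℕ => Kcst ^ s * ((N : ℝ)) ^ ((1 - s) / 2)) atTop atTop := by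
      apply Tendsto.const_mul_atTop (Real.rpow_pos_of_pos Kcst_pos s)
      exact (tendsto_rpow_atTop (by linarith)).comp tendsto_natCast_atTop_atTop
    obtain ⟨N, hN⟩ := ((eventually_ge_atTop 1).and (h1.eventually_ge_atTop 4)).exists
    exact ⟨N, hN⟩
  set q : ℝ := Kcst ^ s * ((N : ℝ)) ^ ((1 - s) / 2) with hq
  have hgood : ∀ (v : List (Fin 3)) (a b : Fin 3), a ≠ b → N ≤ v.length + 1 →
      q * len (v ++ [a, b]) ≤ mw (v ++ [a, b]) ^ s := by
    intro v a b hab hv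
    have h1 := mw_good v a b hab
    have h2 := len_decay (v ++ [a, b])
    have hl := len_pos (v ++ [a, b])
    have hlen : (N : ℝ) ≤ ((v ++ [a, b]).length : ℝ) + 1 := by
      simp only [List.length_append, List.length_cons, List.length_nil]
      exact_mod_cast (by omega : N ≤ v.length + (0 + 1 + 1) + 1)
    generalize len (v ++ [a, b]) = L at *
    have h3 : (N : ℝ) * L ^ 2 ≤ 1 :=
      (mul_le_mul_of_nonneg_right hlen (by positivity)).trans h2
    have hNpos : (0:ℝ) < N := by exact_mod_cast hN1
    have h4 : (N : ℝ) ^ ((1 - s) / 2) * L ^ (1 - s) ≤ 1 := by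
      have : ((N : ℝ) * L ^ 2) ^ ((1 - s) / 2) ≤ 1 :=
        Real.rpow_le_one (by positivity) h3 (by linarith)
      rw [Real.mul_rpow hNpos.le (by positivity), ← Real.rpow_natCast, ← Real.rpow_mul hl.le] at this
      convert this using 3
      push_cast; ring
    have h5 : L = L ^ (1 - s) * L ^ s := by
      rw [← Real.rpow_add hl]; simp
    calc q * L = Kcst ^ s * ((N : ℝ) ^ ((1 - s) / 2) * L ^ (1 - s)) * L ^ s := by
          conv_lhs => rw [h5]
          rw [hq]; ring
      _ ≤ Kcst ^ s * 1 * L ^ s := by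
          have := Real.rpow_pos_of_pos Kcst_pos s
          have := Real.rpow_pos_of_pos hl s
          gcongr
      _ = (Kcst * L) ^ s := by rw [mul_one, Real.mul_rpow Kcst_pos.le hl.le]
      _ ≤ _ := Real.rpow_le_rpow (by have := Kcst_pos; positivity) h1 hs.le
  -- choice of T
  obtain ⟨T, hT⟩ : ∃ T : ℕ, ((Wd N).card : ℝ) ^ 2 * 4 ≤ (T : ℝ) + 1 := by
    obtain ⟨T, hT⟩ := exists_nat_ge (((Wd N).card : ℝ) ^ 2 * 4)
    exact ⟨T, by linarith⟩
  have hlenT : ∀ w : List (Fin 3), ∀ a, len (w ++ List.replicate T a) * (Wd N).card ≤ 1 / 2 := by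
    intro w a
    have h1 := len_append_le w (List.replicate T a)
    have h2 := len_decay (List.replicate T a)
    rw [List.length_replicate] at h2
    have h3 := len_pos (List.replicate T a)
    have hc : (0:ℝ) ≤ (Wd N).card := by positivity
    generalize len (List.replicate T a) = L at *
    generalize ((Wd N).card : ℝ) = C at *
    have h4 : (L * C) ^ 2 ≤ (1 / 2) ^ 2 := by nlinarith [sq_nonneg L]
    have h5 : L * C ≤ 1 / 2 := le_of_sq_le_sq h4 (by norm_num)
    exact (mul_le_mul_of_nonneg_right h1 hc).trans h5
  set M := N + T with hM
  have hM0 : 0 < M := by omega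
  set lam : ℝ := (2:ℝ) ^ ((1:ℝ) / M) with hlam
  have hlam1 : 1 < lam := Real.one_lt_rpow (by norm_num) (by positivity)
  have hlamM : lam ^ M = 2 := by
    rw [hlam, ← Real.rpow_natCast, ← Real.rpow_mul (by norm_num)]
    field_simp; simp
  have claim : ∀ n, (1 / 2) * (1 / 7) ^ M * lam ^ n ≤ Zf s n := by
    intro n
    induction n using Nat.strong_induction_on with
    | _ n ih =>
      by_cases hn : n < M
      · refine le_trans ?_ (Zf_low hs hs1.le n)
        have h1 : lam ^ n ≤ 2 := by rw [← hlamM]; exact pow_le_pow_right₀ hlam1.le hn.le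
        have h2 : ((1:ℝ) / 7) ^ M ≤ (1 / 7) ^ n :=
          pow_le_pow_of_le_one (by norm_num) (by norm_num) hn.le
        have h3 : (0:ℝ) < (1 / 7) ^ M := by positivity
        nlinarith
      · push Not at hn
        obtain ⟨k, rfl⟩ : ∃ k, n = N + k := ⟨n - N, by omega⟩
        have hkT : T ≤ k := by omega
        set c : ℝ := (1 / 2) * (1 / 7) ^ M with hc
        have hc0 : 0 < c := by positivity
        have hZ : Zf s (N + k) = ∑ v ∈ Wd N, Tf s k v := by unfold Zf Tf; rw [sumW_add]
        have hterm : ∀ v ∈ Wd N, q * c * lam ^ (k - T) * (len v - 1 / 2 / (Wd N).card) ≤ Tf s k v := by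
          intro v hv
          have hl := length_of_mem N hv
          rcases List.eq_nil_or_concat v with rfl | ⟨v', a, rfl⟩
          · simp at hl; omega
          · rw [List.concat_eq_append] at *
            refine le_trans ?_ (Tf_split hs (by linarith) hc0.le hlam1.le N hN1 hgood T k hkT
              (fun i hi => ih i (by omega)) v' a (by simp at hl; omega))
            have h1 := hlenT (v' ++ [a]) a
            have hcard : (0:ℝ) < (Wd N).card := by exact_mod_cast (Wd_nonempty N).card_pos
            rw [← le_div_iff₀ hcard] at h1
            apply mul_le_mul_of_nonneg_left _ (by positivity)
            linarith
        rw [hZ]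
        refine le_trans ?_ (Finset.sum_le_sum hterm)
        rw [← Finset.mul_sum, Finset.sum_sub_distrib, sumW_len, Finset.sum_const, nsmul_eq_mul]
        have hcard : (0:ℝ) < (Wd N).card := by exact_mod_cast (Wd_nonempty N).card_pos
        have e : (1:ℝ) - (Wd N).card * (1 / 2 / (Wd N).card) = 1 / 2 := by field_simp; norm_num
        rw [e]
        have e2 : lam ^ (N + k) = 2 * lam ^ (k - T) := by
          rw [← hlamM, ← pow_add]; congr 1; omega
        rw [e2]
        have : 0 < c * lam ^ (k - T) := by positivity
        nlinarith
  have ht : Tendsto (fun n : ℕ => (1 / 2) * (1 / 7) ^ M * lam ^ n) atTop atTop :=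
    (tendsto_pow_atTop_atTop_of_one_lt hlam1).const_mul_atTop (by positivity)
  obtain ⟨n, hn⟩ := (ht.eventually_ge_atTop B).exists
  exact ⟨n, hn.trans (claim n)⟩

/-! ## Cost of neutral runs, gaps, and limit points -/

lemma gi_sym (a : Fin 3) (t : ℝ) :
    gi a (theFixedPts a - t) = 2 * theFixedPts a - gi a (theFixedPts a + t) := by
  have h := fb_gi a (theFixedPts a + t)
  have h2 : fb a (2 * theFixedPts a - gi a (theFixedPts a + t)) = theFixedPts a - t := by
    unfold fb at *
    linear_combination -h
  rw [← h2, gi_fb]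

/-- half-width of the symmetric run cylinder -/
def ew (a : Fin 3) (j : ℕ) : ℝ := gw (List.replicate j a) (theFixedPts a + 1) - theFixedPts a

lemma ew_zero (a : Fin 3) : ew a 0 = 1 := by simp [ew]

lemma ew_succ (a : Fin 3) (j : ℕ) : ew a j = ew a (j + 1) * (1 + kap a * ew a (j + 1) ^ 2) := by
  have h := fb_gi a (gw (List.replicate j a) (theFixedPts a + 1))
  unfold ew
  rw [List.replicate_succ, gw_cons]
  unfold fb at h
  linear_combination -h

lemma gw_rep_sym (a : Fin 3) (j : ℕ) :
    gw (List.replicate j a) (theFixedPts a - 1) = theFixedPts a - ew a j := by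
  induction j with
  | zero => simp [ew]
  | succ j ih =>
    rw [List.replicate_succ, gw_cons, ih, gi_sym]
    have : theFixedPts a + ew a j = gw (List.replicate j a) (theFixedPts a + 1) := by
      unfold ew; ring
    rw [this]
    unfold ew
    rw [List.replicate_succ, gw_cons]; ring

lemma gw_rep_pt (a : Fin 3) (j : ℕ) : gw (List.replicate j a) (theFixedPts a) = theFixedPts a := by
  induction j with
  | zero => rfl
  | succ j ih => rw [List.replicate_succ, gw_cons, ih, gi_pt]

lemma ew_pos (a : Fin 3) (j : ℕ) : 0 < ew a j := by
  have := gw_strictMono (List.replicate j a) (show theFixedPts a < theFixedPts a + 1 by linarith)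
  rw [gw_rep_pt] at this
  unfold ew; linarith

lemma ew_le_one (a : Fin 3) (j : ℕ) : ew a j ≤ 1 := by
  have := gw_lip (List.replicate j a) (show theFixedPts a ≤ theFixedPts a + 1 by linarith)
  rw [gw_rep_pt] at this
  unfold ew; linarith

lemma ew_low (a : Fin 3) (j : ℕ) : 1 ≤ (1 + 144 * (j : ℝ)) * ew a j ^ 2 := by
  induction j with
  | zero => simp [ew_zero]
  | succ j ih =>
    rw [ew_succ a j] at ih
    have h0 := ew_pos a (j + 1)
    have hk := kap_le a
    have hk0 := kap_pos a
    have hj : (0:ℝ) ≤ j := by positivity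
    push_cast
    generalize (j : ℝ) = n at *
    have ht : 0 < ew a (j + 1) ^ 2 := by positivity
    rw [mul_pow] at ih
    generalize ew a (j + 1) ^ 2 = t at *
    by_contra hc
    push Not at hc
    have h1 : (1 + 144 * n) * t < 1 - 144 * t := by linarith
    have h2 : (1 + kap a * t) ^ 2 ≤ (1 + 72 * t) ^ 2 := by
      have : kap a * t ≤ 72 * t := mul_le_mul_of_nonneg_right hk ht.le
      have : 0 ≤ kap a * t := by positivity
      apply pow_le_pow_left₀ <;> linarith
    have h3 : (1 + 144 * n) * t * (1 + 72 * t) ^ 2 < (1 - 144 * t) * (1 + 72 * t) ^ 2 :=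
      mul_lt_mul_of_pos_right h1 (by positivity)
    have h4 : (1 - 144 * t) * (1 + 72 * t) ^ 2 ≤ 1 := by
      have : (1 - 144 * t) * (1 + 72 * t) ^ 2 = 1 - 15552 * t ^ 2 - 746496 * t ^ 3 := by ring
      rw [this]; have := pow_pos ht 3; have := pow_pos ht 2; linarith
    have h5 : (1 + 144 * n) * (t * (1 + kap a * t) ^ 2) ≤ (1 + 144 * n) * t * (1 + 72 * t) ^ 2 := by
      rw [← mul_assoc]
      exact mul_le_mul_of_nonneg_left h2 (by positivity)
    linarith

lemma rep_low (a : Fin 3) (j : ℕ) {x y : ℝ} (hx : x ∈ Icc (0:ℝ) 1) (hy : y ∈ Icc (0:ℝ) 1)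
    (h : x ≤ y) : ew a j ^ 3 * (y - x) ≤
      gw (List.replicate j a) y - gw (List.replicate j a) x := by
  have hp := pt_mem a
  have hb : ∀ z ∈ Icc (0:ℝ) 1, ∀ i, |gw (List.replicate i a) z - theFixedPts a| ≤ ew a i := by
    intro z hz i
    have h1 := gw_mono (List.replicate i a) (show theFixedPts a - 1 ≤ z by linarith [hp.2, hz.1])
    have h2 := gw_mono (List.replicate i a) (show z ≤ theFixedPts a + 1 by linarith [hp.1, hz.2])
    rw [gw_rep_sym] at h1
    rw [abs_le]
    have h3 : gw (List.replicate i a) (theFixedPts a + 1) = theFixedPts a + ew a i := by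
      unfold ew; ring
    constructor <;> linarith
  induction j with
  | zero => simp [ew_zero]
  | succ j ih =>
    have e1 := gi_diff a (gw (List.replicate j a) x) (gw (List.replicate j a) y)
    have b1 := hb x hx (j + 1)
    have b2 := hb y hy (j + 1)
    have m := gw_mono (List.replicate (j + 1) a) h
    have hs := ew_succ a j
    rw [List.replicate_succ] at *
    simp only [gw_cons] at *
    have h0 := ew_pos a (j + 1)
    have hk := kap_pos a
    generalize gi a (gw (List.replicate j a) x) = X at *
    generalize gi a (gw (List.replicate j a) y) = Y at *
    generalize ew a (j + 1) = e at *
    have hQ : Qf (X - theFixedPts a) (Y - theFixedPts a) ≤ 3 * e ^ 2 := by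
      unfold Qf
      have s1 : (X - theFixedPts a) ^ 2 ≤ e ^ 2 := sq_le_sq' (abs_le.1 b1).1 (abs_le.1 b1).2
      have s2 : (Y - theFixedPts a) ^ 2 ≤ e ^ 2 := sq_le_sq' (abs_le.1 b2).1 (abs_le.1 b2).2
      nlinarith [sq_nonneg ((X - theFixedPts a) - (Y - theFixedPts a))]
    have hD : 1 + kap a * Qf (X - theFixedPts a) (Y - theFixedPts a) ≤ (1 + kap a * e ^ 2) ^ 3 := by
      have h1 : kap a * Qf (X - theFixedPts a) (Y - theFixedPts a) ≤ kap a * (3 * e ^ 2) :=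
        mul_le_mul_of_nonneg_left hQ hk.le
      have h2 : 0 ≤ kap a * e ^ 2 := by positivity
      nlinarith [pow_nonneg h2 3, pow_nonneg h2 2]
    rw [e1, hs] at ih
    have hP : 0 < (1 + kap a * e ^ 2) ^ 3 := by positivity
    apply le_of_mul_le_mul_right _ hP
    calc e ^ 3 * (y - x) * (1 + kap a * e ^ 2) ^ 3
        = (e * (1 + kap a * e ^ 2)) ^ 3 * (y - x) := by ring
      _ ≤ _ := ih
      _ ≤ _ := mul_le_mul_of_nonneg_left hD (by linarith)

lemma mw_rep (a : Fin 3) (n : ℕ) : ((1 + 144 * (n : ℝ)) ^ 2)⁻¹ ≤ mw (List.replicate n a) := by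
  apply le_mw
  intro x hx y hy hxy
  refine le_trans ?_ (rep_low a n hx hy hxy.le)
  apply mul_le_mul_of_nonneg_right _ (by linarith)
  have h1 := ew_low a n
  have h2 := ew_pos a n
  have h3 := ew_le_one a n
  have hc : (0:ℝ) < 1 + 144 * (n : ℝ) := by positivity
  generalize 1 + 144 * (n : ℝ) = c at *
  rw [inv_le_iff_one_le_mul₀ (by positivity)]
  have h4 : 1 ≤ (c * ew a n ^ 2) ^ 2 := one_le_pow₀ h1
  have h5 : ew a n ^ 4 ≤ ew a n ^ 3 := pow_le_pow_of_le_one h2.le h3 (by norm_num)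
  calc 1 ≤ ew a n ^ 4 * c ^ 2 := by linarith [h4, show (c * ew a n ^ 2) ^ 2 = ew a n ^ 4 * c ^ 2 by ring]
    _ ≤ _ := by gcongr

lemma gap (v v' : List (Fin 3)) (hlen : v.length = v'.length) (hne : v ≠ v') {x y : ℝ}
    (hx : x ∈ Icc (1/3:ℝ) (2/3)) (hy : y ∈ Icc (1/3:ℝ) (2/3)) :
    (1 / 7) ^ v.length / 3 ≤ |gw v x - gw v' y| := by
  have hx' : x ∈ Icc (0:ℝ) 1 := ⟨by linarith [hx.1], by linarith [hx.2]⟩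
  have hy' : y ∈ Icc (0:ℝ) 1 := ⟨by linarith [hy.1], by linarith [hy.2]⟩
  have main : ∀ (a b : Fin 3) (u u' : List (Fin 3)) (z w : ℝ), a < b → z ∈ Icc (1/3:ℝ) (2/3) →
      w ∈ Icc (0:ℝ) 1 → (1 / 7) ^ (u.length + 1) / 3 ≤ gi b (gw u' w) - gi a (gw u z) := by
    intro a b u u' z w hab hz hw
    have hz' : z ∈ Icc (0:ℝ) 1 := ⟨by linarith [hz.1], by linarith [hz.2]⟩
    have h1 : gi a 1 ≤ gi b 0 := by
      rw [gi_one, gi_zero]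
      have : a.val + 1 ≤ b.val := hab
      have : (a.val : ℝ) + 1 ≤ b.val := by exact_mod_cast this
      linarith
    have h2 : gi b 0 ≤ gi b (gw u' w) := (gi_strictMono b).monotone (gw_mem01 u' hw).1
    have h3 := gi_low a (gw_mem01 u hz') one_mem01 (gw_mem01 u hz').2
    have h4 := gw_low u hz' one_mem01 hz'.2
    have h5 := (gw_mem01 u one_mem01).2
    have h6 : (0:ℝ) < (1 / 7) ^ u.length := by positivity
    rw [pow_succ]
    nlinarith [hz.2]
  induction v generalizing v' with
  | nil => simp at hlen; exact absurd (List.length_eq_zero_iff.1 hlen.symm).symm hne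
  | cons a u ih =>
    cases v' with
    | nil => simp at hlen
    | cons b u' =>
      simp only [List.length_cons, add_left_inj] at hlen
      simp only [gw_cons, List.length_cons]
      by_cases hab : a = b
      · subst hab
        have hne' : u ≠ u' := fun h => hne (by rw [h])
        have i := ih u' hlen hne'
        have hm := mw_abs [a] (gw_mem01 u hx') (gw_mem01 u' hy')
        have hm2 := mw_low [a]
        simp only [List.length_cons, List.length_nil, zero_add, pow_one, gw_cons, gw_nil] at hm hm2
        have := abs_nonneg (gw u x - gw u' y)
        rw [pow_succ]
        nlinarith
      · rcases lt_or_gt_of_ne hab with h | h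
        · have := main a b u u' x y h hx hy'
          rw [abs_sub_comm]
          exact this.trans (le_abs_self _)
        · have := main b a u' u y x h hy hx'
          rw [hlen]
          exact this.trans (le_abs_self _)

/-- finite approximations to the limit point of a sequence of words -/
def HH (b : ℕ → List (Fin 3)) : ℕ → ℕ → ℝ
  | 0, _ => 0
  | m + 1, k => gw (b k) (HH b m (k + 1))

/-- limit point of the words `b k, b (k+1), …` -/
def Xp (b : ℕ → List (Fin 3)) (k : ℕ) : ℝ := ⨆ m, HH b m k

lemma HH_mem (b : ℕ → List (Fin 3)) (m k : ℕ) : HH b m k ∈ Icc (0:ℝ) 1 := by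
  induction m generalizing k with
  | zero => simp [HH]
  | succ m ih => exact gw_mem01 _ (ih _)

lemma HH_mono (b : ℕ → List (Fin 3)) (k : ℕ) : Monotone fun m => HH b m k := by
  apply monotone_nat_of_le_succ
  intro m
  induction m generalizing k with
  | zero => exact (HH_mem b 1 k).1
  | succ m ih => exact gw_mono _ (ih (k + 1))

lemma HH_tendsto (b : ℕ → List (Fin 3)) (k : ℕ) :
    Tendsto (fun m => HH b m k) atTop (𝓝 (Xp b k)) :=
  tendsto_atTop_ciSup (HH_mono b k) ⟨1, by rintro _ ⟨m, rfl⟩; exact (HH_mem b m k).2⟩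

lemma Xp_mem (b : ℕ → List (Fin 3)) (k : ℕ) : Xp b k ∈ Icc (0:ℝ) 1 :=
  isClosed_Icc.mem_of_tendsto (HH_tendsto b k) (Eventually.of_forall fun m => HH_mem b m k)

lemma Xp_rec (b : ℕ → List (Fin 3)) (k : ℕ) : Xp b k = gw (b k) (Xp b (k + 1)) := by
  have h1 : Tendsto (fun m => HH b (m + 1) k) atTop (𝓝 (Xp b k)) :=
    (HH_tendsto b k).comp (tendsto_add_atTop_nat 1)
  have h2 : Tendsto (fun m => HH b (m + 1) k) atTop (𝓝 (gw (b k) (Xp b (k + 1)))) :=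
    ((gw_continuous (b k)).tendsto _).comp (HH_tendsto b (k + 1))
  exact tendsto_nhds_unique h1 h2

/-- block word -/
def bl (n : ℕ → ℕ) (a : ℕ → Fin 3) (k : ℕ) (v : List (Fin 3)) : List (Fin 3) :=
  v ++ 1 :: List.replicate (n k) (a k)

lemma gi_one_mem {x : ℝ} (hx : x ∈ Icc (0:ℝ) 1) : gi 1 x ∈ Icc (1/3:ℝ) (2/3) := by
  have := gi_mem 1 hx
  norm_num at this ⊢
  exact this

lemma mw_bl (n : ℕ → ℕ) (a : ℕ → Fin 3) (k : ℕ) (v : List (Fin 3)) :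
    (mw v * mw [1]) * ((1 + 144 * (n k : ℝ)) ^ 2)⁻¹ ≤ mw (bl n a k v) := by
  have h1 := mw_mul v (1 :: List.replicate (n k) (a k))
  have h2 := mw_mul [1] (List.replicate (n k) (a k))
  have h3 := mw_rep (a k) (n k)
  have p1 := mw_pos v
  have p2 := mw_pos [1]
  refine le_trans ?_ h1
  rw [mul_assoc]
  apply mul_le_mul_of_nonneg_left _ p1.le
  exact (mul_le_mul_of_nonneg_left h3 p2.le).trans h2

section Frost
variable {G : Type} [MeasurableSpace G] [MeasurableSingletonClass G]

lemma cyl_measure (p : PMF G) (ω : ℕ → G) (k : ℕ) :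
    Measure.infinitePi (fun _ : ℕ => p.toMeasure) {η | ∀ i < k, η i = ω i} =
      ∏ i ∈ Finset.range k, p (ω i) := by
  have h1 : {η : ℕ → G | ∀ i < k, η i = ω i} =
      Set.pi (Finset.range k : Set ℕ) (fun i => {ω i}) := by
    ext η; simp [Set.mem_pi]
  rw [h1, Measure.infinitePi_pi _ (fun i _ => measurableSet_singleton _)]
  apply Finset.prod_congr rfl
  intro i _
  rw [PMF.toMeasure_apply_singleton _ _ (measurableSet_singleton _)]

lemma frost_bound (p : PMF G) (θ : ℝ≥0∞) (hθ : θ < 1) (hp : ∀ g, p g ≤ θ)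
    (Φ : (ℕ → G) → ℝ) (K : ℝ≥0∞) (s : ℝ) (hs : 0 < s)
    (h : ∀ (ω η : ℕ → G) (k : ℕ), (∀ i < k, ω i = η i) → ω k ≠ η k →
      ∏ i ∈ Finset.range k, p (ω i) ≤ K * edist (Φ ω) (Φ η) ^ s) (A : Set ℝ) :
    Measure.infinitePi (fun _ : ℕ => p.toMeasure) (Φ ⁻¹' A) ≤ K * Metric.ediam A ^ s := by
  classical
  by_cases hex : ∃ k, ∃ ω ∈ Φ ⁻¹' A, ∃ η ∈ Φ ⁻¹' A, ω k ≠ η k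
  · obtain ⟨ω, hω, η, hη, hne⟩ := Nat.find_spec hex
    have hmin : ∀ i < Nat.find hex, ∀ ω ∈ Φ ⁻¹' A, ∀ η ∈ Φ ⁻¹' A, ω i = η i := by
      intro i hi ω hω η hη
      by_contra hc
      exact Nat.find_min hex hi ⟨ω, hω, η, hη, hc⟩
    generalize Nat.find hex = k at *
    calc _ ≤ Measure.infinitePi (fun _ : ℕ => p.toMeasure) {η | ∀ i < k, η i = ω i} :=
          measure_mono fun ζ hζ i hi => hmin i hi ζ hζ ω hω
      _ = ∏ i ∈ Finset.range k, p (ω i) := cyl_measure p ω k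
      _ ≤ K * edist (Φ ω) (Φ η) ^ s := h ω η k (fun i hi => hmin i hi ω hω η hη) hne
      _ ≤ _ := by
        gcongr
        exact Metric.edist_le_ediam_of_mem hω hη
  · push Not at hex
    rcases (Φ ⁻¹' A).eq_empty_or_nonempty with h0 | ⟨ω, hω⟩
    · rw [h0]; simp
    · have hk : ∀ k : ℕ, Measure.infinitePi (fun _ : ℕ => p.toMeasure) (Φ ⁻¹' A) ≤ θ ^ k := by
        intro k
        calc _ ≤ Measure.infinitePi (fun _ : ℕ => p.toMeasure) {η | ∀ i < k, η i = ω i} :=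
              measure_mono fun ζ hζ i hi => hex i ζ hζ ω hω
          _ = ∏ i ∈ Finset.range k, p (ω i) := cyl_measure p ω k
          _ ≤ ∏ i ∈ Finset.range k, θ := Finset.prod_le_prod' fun i _ => hp _
          _ = θ ^ k := by simp
      have : Measure.infinitePi (fun _ : ℕ => p.toMeasure) (Φ ⁻¹' A) ≤ 0 :=
        ge_of_tendsto' (ENNReal.tendsto_pow_atTop_nhds_zero_of_lt_one hθ) hk
      exact this.trans (zero_le)

lemma frost (p : PMF G) (θ : ℝ≥0∞) (hθ : θ < 1) (hp : ∀ g, p g ≤ θ)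
    (Φ : (ℕ → G) → ℝ) (hΦ : Measurable Φ) (K : ℝ≥0∞) (hK0 : K ≠ 0) (hK : K ≠ ⊤)
    (s : NNReal) (hs : 0 < s)
    (h : ∀ (ω η : ℕ → G) (k : ℕ), (∀ i < k, ω i = η i) → ω k ≠ η k →
      ∏ i ∈ Finset.range k, p (ω i) ≤ K * edist (Φ ω) (Φ η) ^ (s : ℝ)) (E : Set ℝ)
    (hE : ∀ ω, Φ ω ∈ E) : (s : ℝ≥0∞) ≤ dimH E := by
  apply le_dimH_of_hausdorffMeasure_ne_zero
  set μ := Measure.infinitePi (fun _ : ℕ => p.toMeasure) with hμ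
  have h1 : K⁻¹ • μ.map Φ ≤ Measure.hausdorffMeasure (s : ℝ) := by
    apply Measure.le_hausdorffMeasure _ _ 1 one_pos
    intro A _
    have : μ.map Φ A ≤ K * Metric.ediam A ^ (s : ℝ) := by
      calc μ.map Φ A ≤ μ.map Φ (closure A) := measure_mono subset_closure
        _ = μ (Φ ⁻¹' closure A) := Measure.map_apply hΦ isClosed_closure.measurableSet
        _ ≤ K * Metric.ediam (closure A) ^ (s : ℝ) :=
          frost_bound p θ hθ hp Φ K s (by exact_mod_cast hs) h _
        _ = _ := by rw [Metric.ediam_closure]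
    rw [Measure.smul_apply, smul_eq_mul]
    calc K⁻¹ * μ.map Φ A ≤ K⁻¹ * (K * Metric.ediam A ^ (s : ℝ)) := by gcongr
      _ = _ := by rw [← mul_assoc, ENNReal.inv_mul_cancel hK0 hK, one_mul]
  have h2 : 1 ≤ μ.map Φ E := by
    refine le_trans ?_ (Measure.le_map_apply hΦ.aemeasurable E)
    have : Φ ⁻¹' E = univ := by ext; simp [hE]
    rw [this]; simp [hμ]
  intro h0
  have h3 := h1 E
  rw [h0, Measure.smul_apply, smul_eq_mul] at h3
  have h4 : K⁻¹ * μ.map Φ E = 0 := le_antisymm h3 (zero_le)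
  rcases mul_eq_zero.1 h4 with h5 | h5
  · exact hK (ENNReal.inv_eq_zero.1 h5)
  · rw [h5] at h2; simp at h2

end Frost

lemma Xdiff (b b' : ℕ → List (Fin 3)) (k : ℕ) (h : ∀ i < k, b i = b' i) :
    (∏ i ∈ Finset.range k, mw (b i)) * |Xp b k - Xp b' k| ≤ |Xp b 0 - Xp b' 0| := by
  induction k with
  | zero => simp
  | succ k ih =>
    refine le_trans ?_ (ih fun i hi => h i (hi.trans (Nat.lt_succ_self k)))
    rw [Finset.prod_range_succ, mul_assoc]
    apply mul_le_mul_of_nonneg_left _ (Finset.prod_nonneg fun i _ => (mw_pos _).le)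
    rw [Xp_rec b k, Xp_rec b' k, ← h k (Nat.lt_succ_self k)]
    exact mw_abs _ (Xp_mem _ _) (Xp_mem _ _)

lemma Xgap (n : ℕ → ℕ) (a : ℕ → Fin 3) (ℓ : ℕ) (ω η : ℕ → {v // v ∈ Wd ℓ}) (k : ℕ) (hne : ω k ≠ η k) :
    (1 / 7) ^ ℓ / 3 ≤ |Xp (fun k => bl n a k (ω k)) k - Xp (fun k => bl n a k (η k)) k| := by
  rw [Xp_rec _ k, Xp_rec (fun k => bl n a k (η k)) k]
  simp only [bl, gw_append, gw_cons]
  have h1 := length_of_mem ℓ (ω k).2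
  have h2 := length_of_mem ℓ (η k).2
  have := gap (ω k) (η k) (h1.trans h2.symm) (fun h => hne (Subtype.ext h))
    (gi_one_mem (gw_mem01 (List.replicate (n k) (a k)) (Xp_mem (fun k => bl n a k (ω k)) (k+1))))
    (gi_one_mem (gw_mem01 (List.replicate (n k) (a k)) (Xp_mem (fun k => bl n a k (η k)) (k+1))))
  rwa [h1] at this

lemma num_end {s s1 Cst R Q c D : ℝ} {k : ℕ} (hs : 0 < s) (hss : s < s1) (hs1 : s1 < 1)
    (hC : 0 < Cst) (hR0 : 0 < R) (hQ1 : 1 ≤ Q) (hc0 : 0 < c) (hDpos : 0 < D) (hR3 : R ≤ (1/3) ^ k)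
    (hDl : R * (Q ^ 2)⁻¹ * c ≤ D) (hcost : Q ^ 2 ≤ Cst * ((3:ℝ) ^ (s1 - s)) ^ k) :
    R ^ s1 ≤ max Cst 1 * c ^ (-s) * D ^ s := by
  have e1 : R ^ s1 = R ^ s * R ^ (s1 - s) := by
    rw [← Real.rpow_add hR0]; ring_nf
  have e2 : R ^ (s1 - s) * ((3:ℝ) ^ (s1 - s)) ^ k ≤ 1 := by
    calc R ^ (s1 - s) * ((3:ℝ) ^ (s1 - s)) ^ k ≤ ((1/3) ^ k) ^ (s1 - s) * ((3:ℝ) ^ (s1 - s)) ^ k := by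
          gcongr
      _ = 1 := by
        rw [← Real.rpow_natCast ((3:ℝ) ^ (s1 - s)) k, ← Real.rpow_mul (by norm_num), mul_comm (s1 - s),
          Real.rpow_mul (by norm_num), ← Real.mul_rpow (by positivity) (by positivity),
          Real.rpow_natCast, ← mul_pow]
        norm_num
  have e3 : R ^ s ≤ D ^ s * (Q ^ 2) ^ s * c ^ (-s) := by
    rw [Real.rpow_neg hc0.le, ← div_eq_mul_inv, le_div_iff₀ (by positivity),
      ← Real.mul_rpow hR0.le hc0.le, ← Real.mul_rpow hDpos.le (by positivity)]
    apply Real.rpow_le_rpow (by positivity) _ hs.le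
    have hq : 0 < Q ^ 2 := by positivity
    have : R * (Q ^ 2)⁻¹ * c * Q ^ 2 = R * c := by field_simp
    nlinarith
  have e4 : (Q ^ 2) ^ s ≤ Q ^ 2 := by
    conv_rhs => rw [← Real.rpow_one (Q ^ 2)]
    exact Real.rpow_le_rpow_of_exponent_le (one_le_pow₀ hQ1) (by linarith)
  have e5 : (Q ^ 2) ^ s * R ^ (s1 - s) ≤ max Cst 1 := by
    have hRn : 0 ≤ R ^ (s1 - s) := by positivity
    calc (Q ^ 2) ^ s * R ^ (s1 - s) ≤ (Cst * ((3:ℝ) ^ (s1 - s)) ^ k) * R ^ (s1 - s) := by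
          gcongr
          exact e4.trans (hcost)
      _ = Cst * (R ^ (s1 - s) * ((3:ℝ) ^ (s1 - s)) ^ k) := by ring
      _ ≤ Cst * 1 := by gcongr
      _ ≤ _ := by simp
  rw [e1]
  calc R ^ s * R ^ (s1 - s) ≤ (D ^ s * (Q ^ 2) ^ s * c ^ (-s)) * R ^ (s1 - s) := by gcongr
    _ = ((Q ^ 2) ^ s * R ^ (s1 - s)) * (D ^ s * c ^ (-s)) := by ring
    _ ≤ max Cst 1 * (D ^ s * c ^ (-s)) := by gcongr
    _ = _ := by ring

lemma dim_lower (ℓ : ℕ) (n : ℕ → ℕ) (a : ℕ → Fin 3) (s s1 : ℝ) (hs : 0 < s) (hss : s < s1)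
    (hs1 : s1 < 1) (hZ : 1 ≤ Zf s1 ℓ * mw [1] ^ s1) (Cst : ℝ) (hC : 0 < Cst)
    (hcost : ∀ k, (∏ i ∈ Finset.range k, (1 + 144 * (n i : ℝ))) ^ 2 ≤
      Cst * ((3:ℝ) ^ (s1 - s)) ^ k) (E : Set ℝ)
    (hE : ∀ ω : ℕ → {v // v ∈ Wd ℓ}, Xp (fun k => bl n a k (ω k)) 0 ∈ E) :
    ENNReal.ofReal s ≤ dimH E := by
  let _ : MeasurableSpace {v // v ∈ Wd ℓ} := ⊤
  have hs1' : 0 < s1 := hs.trans hss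
  have hm1 := mw_pos [1]
  have hZp : 0 < Zf s1 ℓ := by
    by_contra hc
    push Not at hc
    have := mul_nonpos_of_nonpos_of_nonneg hc (Real.rpow_nonneg hm1.le s1)
    linarith
  set r : {v // v ∈ Wd ℓ} → ℝ := fun v => mw v * mw [1] with hr
  have hr0 : ∀ v, 0 < r v := fun v => mul_pos (mw_pos _) hm1
  have hr3 : ∀ v, r v ≤ 1 / 3 := by
    intro v
    have h1 := (mw_le_len v.1).trans (len_le_one v.1)
    have h2 := (mw_le_len [1]).trans (len_cons_third 1 [])
    have := mw_pos v.1
    simp only [hr]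
    nlinarith
  set P : {v // v ∈ Wd ℓ} → ℝ := fun v => mw v ^ s1 / Zf s1 ℓ with hP
  have hP0 : ∀ v, 0 ≤ P v := fun v => div_nonneg (Real.rpow_nonneg (mw_pos _).le _) hZp.le
  have hPr : ∀ v, P v ≤ r v ^ s1 := by
    intro v
    simp only [hP, hr]
    rw [Real.mul_rpow (mw_pos _).le hm1.le, div_le_iff₀ hZp]
    have := Real.rpow_nonneg (mw_pos v.1).le s1
    nlinarith
  have hsum : ∑ v, P v = 1 := by
    simp only [hP]
    rw [← Finset.sum_div, Finset.sum_coe_sort (Wd ℓ) (fun v => mw v ^ s1)]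
    exact div_self hZp.ne'
  let p : PMF {v // v ∈ Wd ℓ} := PMF.ofFintype (fun v => ENNReal.ofReal (P v)) (by
    rw [← ENNReal.ofReal_sum_of_nonneg (fun v _ => hP0 v), hsum, ENNReal.ofReal_one])
  have hp : ∀ v, p v = ENNReal.ofReal (P v) := fun v => rfl
  set c : ℝ := (1 / 7) ^ ℓ / 3 with hc
  have hc0 : 0 < c := by positivity
  have hCc : 0 < (max Cst 1) * c ^ (-s) := by positivity
  have hth : (1 / 3 : ℝ) ^ s1 < 1 := Real.rpow_lt_one (by norm_num) (by norm_num) hs1'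
  have := frost p (ENNReal.ofReal ((1 / 3) ^ s1)) (by rw [← ENNReal.ofReal_one]; exact (ENNReal.ofReal_lt_ofReal_iff one_pos).2 hth)
    (by
      intro v
      rw [hp]
      exact ENNReal.ofReal_le_ofReal ((hPr v).trans
        (Real.rpow_le_rpow (hr0 v).le (hr3 v) hs1'.le)))
    (fun ω => Xp (fun k => bl n a k (ω k)) 0) ?_
    (ENNReal.ofReal ((max Cst 1) * c ^ (-s))) (by simpa using hCc) ENNReal.ofReal_ne_top
    ⟨s, hs.le⟩ hs ?_ E hE
  · convert this using 1
    rw [ENNReal.ofReal, Real.toNNReal_of_nonneg hs.le]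
    rfl
  · have hH : ∀ m k, Measurable fun ω : ℕ → {v // v ∈ Wd ℓ} => HH (fun k => bl n a k (ω k)) m k := by
      intro m
      induction m with
      | zero => intro k; exact measurable_const
      | succ m ih =>
        intro k
        have h1 : Measurable fun q : {v // v ∈ Wd ℓ} × ℝ => gw (bl n a k q.1) q.2 := by
          apply measurable_from_prod_countable_right
          intro v
          exact (gw_continuous (bl n a k v)).measurable
        exact h1.comp ((measurable_pi_apply k).prodMk (ih (k + 1)))
    apply measurable_of_tendsto_metrizable (f := fun m => fun ω : ℕ → {v // v ∈ Wd ℓ} => HH (fun k => bl n a k (ω k)) m 0) (fun m => hH m 0)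
    rw [tendsto_pi_nhds]
    intro ω
    exact HH_tendsto _ 0
  · intro ω η k hi hne
    have hd := Xdiff (fun k => bl n a k (ω k)) (fun k => bl n a k (η k)) k
      (fun i hik => by rw [hi i hik])
    have hg := Xgap n a ℓ ω η k hne
    set D := |Xp (fun k => bl n a k (ω k)) 0 - Xp (fun k => bl n a k (η k)) 0| with hD
    set R := ∏ i ∈ Finset.range k, r (ω i) with hR
    set Q := ∏ i ∈ Finset.range k, (1 + 144 * (n i : ℝ)) with hQ
    have hR0 : 0 < R := Finset.prod_pos fun i _ => hr0 _
    have hQ1 : 1 ≤ Q := by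
      have hone : (1:ℝ) = ∏ _i ∈ Finset.range k, (1:ℝ) := by simp
      rw [hQ]
      refine hone.le.trans ?_
      apply Finset.prod_le_prod
      · intro i _; norm_num
      · intro i _
        have : (0:ℝ) ≤ n i := by positivity
        linarith
    have hR3 : R ≤ (1/3) ^ k := by
      calc R ≤ ∏ i ∈ Finset.range k, (1/3 : ℝ) :=
            Finset.prod_le_prod (fun i _ => (hr0 _).le) fun i _ => hr3 _
        _ = _ := by simp
    have hm : R * (Q ^ 2)⁻¹ ≤ ∏ i ∈ Finset.range k, mw (bl n a i (ω i)) := by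
      rw [hR, hQ, ← Finset.prod_pow, ← Finset.prod_inv_distrib, ← Finset.prod_mul_distrib]
      apply Finset.prod_le_prod
      · intro i _
        have := hr0 (ω i)
        positivity
      · intro i _
        exact mw_bl n a i (ω i)
    have hDl : R * (Q ^ 2)⁻¹ * c ≤ D := by
      refine le_trans ?_ hd
      apply mul_le_mul hm hg hc0.le
      exact Finset.prod_nonneg fun i _ => (mw_pos _).le
    have hprod : ∏ i ∈ Finset.range k, p (ω i) = ENNReal.ofReal (∏ i ∈ Finset.range k, P (ω i)) := by
      rw [ENNReal.ofReal_prod_of_nonneg fun i _ => hP0 _]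
      exact Finset.prod_congr rfl fun i _ => hp _
    have hPR : ∏ i ∈ Finset.range k, P (ω i) ≤ R ^ s1 := by
      rw [hR, ← Real.finsetProd_rpow _ _ (fun i _ => (hr0 _).le)]
      exact Finset.prod_le_prod (fun i _ => hP0 _) fun i _ => hPr _
    rw [hprod, edist_dist, Real.dist_eq]
    have hDpos : 0 < D := lt_of_lt_of_le (by positivity) hDl
    rw [ENNReal.ofReal_rpow_of_pos hDpos, ← ENNReal.ofReal_mul hCc.le]
    apply ENNReal.ofReal_le_ofReal
    refine hPR.trans ?_
    exact num_end hs hss hs1 hC hR0 hQ1 hc0 hDpos hR3 hDl (hcost k)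

/-- run lengths -/
def nn (k : ℕ) : ℕ := if Nat.sqrt k * Nat.sqrt k = k then k else 0

lemma nn_le (k : ℕ) : nn k ≤ k := by
  unfold nn; split_ifs <;> simp

/-- total run length -/
def WW (k : ℕ) : ℕ := ∑ i ∈ Finset.range k, nn i

lemma WW_succ (k : ℕ) : WW (k + 1) = WW k + nn k := Finset.sum_range_succ _ _

lemma WW_mono : Monotone WW := monotone_nat_of_le_succ fun k => by rw [WW_succ]; omega

lemma WW_sq (j : ℕ) : j ^ 3 ≤ 3 * WW ((j + 1) * (j + 1)) := by
  induction j with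
  | zero => simp
  | succ j ih =>
    have h1 : WW ((j + 1) * (j + 1) + 1) ≤ WW ((j + 1 + 1) * (j + 1 + 1)) := WW_mono (by nlinarith)
    rw [WW_succ] at h1
    have h2 : nn ((j + 1) * (j + 1)) = (j + 1) * (j + 1) := by
      unfold nn; rw [Nat.sqrt_eq]; simp
    rw [h2] at h1
    nlinarith

lemma WW_big (M : ℕ) : ∃ k0, ∀ k ≥ k0, M * k ≤ WW k := by
  refine ⟨(27 * M + 2) * (27 * M + 2), fun k hk => ?_⟩
  have h1 : 27 * M + 2 ≤ Nat.sqrt k := Nat.le_sqrt.2 hk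
  obtain ⟨j, hj⟩ : ∃ j, Nat.sqrt k = j + 1 := ⟨Nat.sqrt k - 1, by omega⟩
  have h2 := Nat.sqrt_le k
  have h3 := Nat.lt_succ_sqrt k
  have h4 := WW_mono h2
  rw [hj] at h1 h3 h4
  have h5 := WW_sq j
  have hj1 : 27 * M + 1 ≤ j := by omega
  have h6 : k ≤ 9 * (j * j) := by
    simp only [Nat.succ_eq_add_one] at h3
    nlinarith
  have h7 : 27 * (M * k) ≤ 27 * WW k := by
    calc 27 * (M * k) = (27 * M) * k := by ring
      _ ≤ j * (9 * (j * j)) := Nat.mul_le_mul (by omega) h6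
      _ = 9 * j ^ 3 := by ring
      _ ≤ 27 * WW k := by omega
  omega

lemma cost1 (k : ℕ) : ∏ i ∈ Finset.range (k + 1), (1 + 144 * (nn i : ℝ)) ≤
    (1 + 144 * (k : ℝ)) ^ Nat.sqrt k := by
  induction k with
  | zero => simp [nn]
  | succ k ih =>
    rw [Finset.prod_range_succ]
    have hmono : (1 + 144 * (k : ℝ)) ^ Nat.sqrt k ≤ (1 + 144 * ((k + 1 : ℕ) : ℝ)) ^ Nat.sqrt k := by
      push_cast
      gcongr
      linarith
    have hone : (1:ℝ) ≤ 1 + 144 * ((k + 1 : ℕ) : ℝ) := by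
      have : (0:ℝ) ≤ ((k + 1 : ℕ) : ℝ) := by positivity
      linarith
    have hs : Nat.sqrt k ≤ Nat.sqrt (k + 1) := Nat.sqrt_le_sqrt (by omega)
    by_cases h : Nat.sqrt (k + 1) * Nat.sqrt (k + 1) = k + 1
    · have hlt : Nat.sqrt k + 1 ≤ Nat.sqrt (k + 1) := by
        have := Nat.sqrt_le k
        by_contra hc
        have : Nat.sqrt (k + 1) = Nat.sqrt k := by omega
        rw [this] at h
        omega
      have : nn (k + 1) = k + 1 := by unfold nn; rw [if_pos h]
      rw [this]
      calc _ ≤ (1 + 144 * ((k + 1 : ℕ) : ℝ)) ^ Nat.sqrt k * (1 + 144 * ((k + 1 : ℕ) : ℝ)) := by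
            apply mul_le_mul_of_nonneg_right (ih.trans hmono); linarith
        _ = (1 + 144 * ((k + 1 : ℕ) : ℝ)) ^ (Nat.sqrt k + 1) := by rw [pow_succ]
        _ ≤ _ := pow_le_pow_right₀ hone hlt
    · have : nn (k + 1) = 0 := by unfold nn; rw [if_neg h]
      rw [this]
      calc _ ≤ (1 + 144 * ((k + 1 : ℕ) : ℝ)) ^ Nat.sqrt k := by simpa using ih.trans hmono
        _ ≤ _ := pow_le_pow_right₀ hone hs

lemma cost2 (k : ℕ) : (∏ i ∈ Finset.range k, (1 + 144 * (nn i : ℝ))) ≤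
    (1 + 144 * (k : ℝ)) ^ Nat.sqrt k := by
  refine le_trans ?_ (cost1 k)
  rw [Finset.prod_range_succ]
  have h0 : 0 ≤ ∏ i ∈ Finset.range k, (1 + 144 * (nn i : ℝ)) :=
    Finset.prod_nonneg fun i _ => by positivity
  have : (0:ℝ) ≤ (nn k : ℝ) := by positivity
  nlinarith

lemma cost3 (β : ℝ) (hβ : 1 < β) : ∃ k0, ∀ k ≥ k0,
    (∏ i ∈ Finset.range k, (1 + 144 * (nn i : ℝ))) ^ 2 ≤ β ^ k := by
  have hl : 0 < Real.log β := Real.log_pos hβ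
  obtain ⟨m, hm⟩ := exists_nat_ge (32 / Real.log β)
  refine ⟨(m + 1) ^ 4, fun k hk => ?_⟩
  have h0 : 0 ≤ ∏ i ∈ Finset.range k, (1 + 144 * (nn i : ℝ)) :=
    Finset.prod_nonneg fun i _ => by positivity
  refine (pow_le_pow_left₀ h0 (cost2 k) 2).trans ?_
  set t : ℝ := (k : ℝ) ^ (1/4 : ℝ) with ht
  have ht0 : 0 ≤ t := by positivity
  have ht4 : t ^ 4 = k := by
    rw [ht, ← Real.rpow_natCast, ← Real.rpow_mul (by positivity)]
    norm_num
  have htm : (m : ℝ) + 1 ≤ t := by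
    have : ((m:ℝ) + 1) ^ 4 ≤ t ^ 4 := by rw [ht4]; exact_mod_cast hk
    exact le_of_pow_le_pow_left₀ (by norm_num) ht0 this
  have ht1 : 1 ≤ t := by
    have : (0:ℝ) ≤ m := by positivity
    linarith
  have hsq : (Nat.sqrt k : ℝ) ≤ t ^ 2 := by
    have h1 : (Nat.sqrt k : ℝ) * Nat.sqrt k ≤ k := by exact_mod_cast Nat.sqrt_le k
    rw [← ht4] at h1
    apply le_of_pow_le_pow_left₀ (n := 2) (by norm_num) (by positivity)
    nlinarith
  have hpos : (0:ℝ) < 1 + 144 * (k:ℝ) := by positivity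
  rw [← Real.log_le_log_iff (by positivity) (by positivity), Real.log_pow, Real.log_pow, Real.log_pow]
  have hlog : Real.log (1 + 144 * (k : ℝ)) ≤ 16 * t := by
    have h1 : 1 + 144 * (k:ℝ) ≤ (4 * t) ^ 4 := by
      rw [mul_pow, ht4]
      have : (1:ℝ) ≤ k := by rw [← ht4]; exact one_le_pow₀ ht1
      linarith
    have h2 := Real.log_le_log hpos h1
    rw [Real.log_pow] at h2
    have h3 := Real.log_le_sub_one_of_pos (show 0 < 4 * t by linarith)
    push_cast at h2
    linarith
  have htl : 32 ≤ t * Real.log β := by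
    have := (div_le_iff₀ hl).1 (show 32 / Real.log β ≤ t by linarith)
    linarith
  have hl0 : 0 ≤ Real.log (1 + 144 * (k : ℝ)) := Real.log_nonneg (by
    have : (0:ℝ) ≤ k := by positivity
    linarith)
  calc ((2:ℕ):ℝ) * ((Nat.sqrt k : ℝ) * Real.log (1 + 144 * (k : ℝ))) ≤ 2 * (t ^ 2 * (16 * t)) := by
        push_cast
        gcongr
    _ = 32 * t ^ 3 := by ring
    _ ≤ (t * Real.log β) * t ^ 3 := by gcongr
    _ = _ := by rw [← ht4]; ring

lemma cost4 (β : ℝ) (hβ : 1 < β) : ∃ Cst > 0, ∀ k,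
    (∏ i ∈ Finset.range k, (1 + 144 * (nn i : ℝ))) ^ 2 ≤ Cst * β ^ k := by
  obtain ⟨k0, h⟩ := cost3 β hβ
  set F : ℕ → ℝ := fun k => (∏ i ∈ Finset.range k, (1 + 144 * (nn i : ℝ))) ^ 2 with hF
  have hF0 : ∀ k, 0 ≤ F k := fun k => by positivity
  have hS : 0 ≤ ∑ j ∈ Finset.range k0, F j := Finset.sum_nonneg fun j _ => hF0 j
  refine ⟨1 + ∑ j ∈ Finset.range k0, F j, by positivity, fun k => ?_⟩
  have hb : 1 ≤ β ^ k := one_le_pow₀ hβ.le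
  by_cases hk : k0 ≤ k
  · have := h k hk
    nlinarith
  · have h1 : F k ≤ ∑ j ∈ Finset.range k0, F j :=
      Finset.single_le_sum (fun j _ => hF0 j) (Finset.mem_range.2 (by omega))
    change F k ≤ _
    nlinarith

lemma path_ex {X : Type} [MetricSpace X] [PreconnectedSpace X] (ε : ℝ) (hε : 0 < ε) (x y : X) :
    ∃ (N : ℕ) (c : ℕ → X), c 0 = x ∧ c N = y ∧ ∀ i < N, dist (c i) (c (i + 1)) < ε := by
  have h : Relation.ReflTransGen (fun u v : X => dist u v < ε) x y := by
    apply PreconnectedSpace.induction₂' (fun u v => Relation.ReflTransGen (fun u v : X => dist u v < ε) u v)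
    · intro u
      filter_upwards [Metric.ball_mem_nhds u hε] with v hv
      rw [Metric.mem_ball] at hv
      exact ⟨Relation.ReflTransGen.single (by rwa [dist_comm]), Relation.ReflTransGen.single hv⟩
    · exact ⟨fun a b c h1 h2 => h1.trans h2⟩
  induction h with
  | refl => exact ⟨0, fun _ => x, rfl, rfl, by simp⟩
  | @tail u v _ huv ih =>
    obtain ⟨N, c, h0, hN, hs⟩ := ih
    refine ⟨N + 1, fun i => if i ≤ N then c i else v, by simp [h0], by simp, ?_⟩
    intro i hi
    by_cases h : i < N
    · have : i + 1 ≤ N := h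
      simp only [h.le, this, if_true]
      exact hs i h
    · have : i = N := by omega
      subst this
      simp [hN, huv]

lemma seq_ex {X : Type} [MetricSpace X] [PreconnectedSpace X] [TopologicalSpace.SeparableSpace X]
    [Nonempty X] : ∃ p : ℕ → X, Tendsto (fun t => dist (p t) (p (t + 1))) atTop (𝓝 0) ∧
      ∀ x : X, ∀ ε > 0, ∀ T, ∃ t ≥ T, dist (p t) x < ε := by
  set d : ℕ → X := fun m => TopologicalSpace.denseSeq X (Nat.unpair m).1 with hd
  have hdense : ∀ x : X, ∀ ε > 0, ∀ T, ∃ t ≥ T, dist (d t) x < ε := by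
    intro x ε hε T
    obtain ⟨j, hj⟩ := (TopologicalSpace.denseRange_denseSeq X).exists_dist_lt x hε
    refine ⟨Nat.pair j T, Nat.right_le_pair _ _, ?_⟩
    simp only [hd, Nat.unpair_pair]
    rwa [dist_comm]
  have hpath := fun m : ℕ => path_ex (1 / ((m : ℝ) + 1)) (by positivity) (d m) (d (m + 1))
  choose N c c0 cN cs using hpath
  let nx : ℕ × ℕ → ℕ × ℕ := fun q => if q.2 < N q.1 then (q.1, q.2 + 1) else (q.1 + 1, 0)
  let st : ℕ → ℕ × ℕ := fun t => nx^[t] (0, 0)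
  have st0 : st 0 = (0, 0) := rfl
  have stS : ∀ t, st (t + 1) = nx (st t) := fun t => Function.iterate_succ_apply' _ _ _
  have hle : ∀ t, (st t).2 ≤ N (st t).1 := by
    intro t
    induction t with
    | zero => simp [st0]
    | succ t ih =>
      rw [stS]
      simp only [nx]
      split_ifs with h
      · simpa using h
      · simp
  have hup : ∀ t, (st (t + 1)).1 ≤ (st t).1 + 1 := by
    intro t; rw [stS]; simp only [nx]; split_ifs <;> simp
  have hmono : Monotone fun t => (st t).1 := by
    apply monotone_nat_of_le_succ
    intro t; rw [stS]; simp only [nx]; split_ifs <;> simp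
  have hlt : ∀ t, (st t).1 ≤ t := by
    intro t
    induction t with
    | zero => simp [st0]
    | succ t ih => exact (hup t).trans (by omega)
  have hreach : ∀ m, ∃ t, st t = (m, 0) := by
    intro m
    induction m with
    | zero => exact ⟨0, rfl⟩
    | succ m ih =>
      obtain ⟨t, ht⟩ := ih
      have : ∀ i ≤ N m, st (t + i) = (m, i) := by
        intro i
        induction i with
        | zero => intro _; exact ht
        | succ i ih2 =>
          intro hi
          rw [← add_assoc, stS, ih2 (by omega)]
          simp only [nx]
          rw [if_pos (by omega)]
      refine ⟨t + N m + 1, ?_⟩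
      rw [stS, this _ le_rfl]
      simp [nx]
  refine ⟨fun t => c (st t).1 (st t).2, ?_, ?_⟩
  · have hb : ∀ t, dist (c (st t).1 (st t).2) (c (st (t + 1)).1 (st (t + 1)).2) ≤
        1 / (((st t).1 : ℝ) + 1) := by
      intro t
      rw [stS]
      simp only [nx]
      split_ifs with h
      · exact (cs _ _ h).le
      · have : (st t).2 = N (st t).1 := le_antisymm (hle t) (not_lt.1 h)
        simp only [this, cN, c0, dist_self]
        positivity
    have htop : Tendsto (fun t => (st t).1) atTop atTop := by
      apply tendsto_atTop_atTop_of_monotone hmono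
      intro m
      obtain ⟨t, ht⟩ := hreach m
      exact ⟨t, by simp [ht]⟩
    exact squeeze_zero (fun t => dist_nonneg) hb (tendsto_one_div_add_atTop_nhds_zero_nat.comp htop)
  · intro x ε hε T
    obtain ⟨m, hm, hdm⟩ := hdense x ε hε T
    obtain ⟨t, ht⟩ := hreach m
    refine ⟨t, ?_, ?_⟩
    · have := hlt t
      rw [ht] at this
      simp only at this
      omega
    · simp only [ht, c0]; exact hdm

/-- slow-down of a slowly moving sequence -/
lemma slow (p : ℕ → Fin 3 → ℝ) (hp : Tendsto (fun t => dist (p t) (p (t + 1))) atTop (𝓝 0))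
    (w W : ℕ → ℝ) (hw : ∀ i, 0 ≤ w i) (hW : ∀ k, W k = ∑ i ∈ Finset.range k, w i)
    (hWt : Tendsto W atTop atTop) :
    ∃ κ : ℕ → ℕ, (∀ m, ∃ k ≥ m, κ k = m) ∧
      ∀ ε > 0, ∃ k0, ∀ k ≥ k0,
        ‖∑ i ∈ Finset.range k, w i • p (κ i) - W k • p (κ k)‖ ≤ ε * W k := by
  classical
  have hWS : ∀ k, W (k + 1) = W k + w k := fun k => by rw [hW, hW, Finset.sum_range_succ]
  have hW0 : ∀ k, 0 ≤ W k := fun k => by rw [hW]; exact Finset.sum_nonneg fun i _ => hw i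
  let nx : ℕ → ℕ × (Fin 3 → ℝ) → ℕ × (Fin 3 → ℝ) := fun J q =>
    (if ‖q.2 - W J • p q.1‖ ≤ W J / ((q.1 : ℝ) + 1) then q.1 + 1 else q.1, q.2 + w J • p q.1)
  let st : ℕ → ℕ × (Fin 3 → ℝ) := fun t => Nat.rec (0, 0) nx t
  have stS : ∀ t, st (t + 1) = nx t (st t) := fun t => rfl
  let κ : ℕ → ℕ := fun t => (st t).1
  let S : ℕ → Fin 3 → ℝ := fun t => (st t).2
  have κ0 : κ 0 = 0 := rfl
  have κS : ∀ t, κ (t + 1) = if ‖S t - W t • p (κ t)‖ ≤ W t / ((κ t : ℝ) + 1) then κ t + 1 else κ t :=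
    fun t => rfl
  have SS : ∀ t, S (t + 1) = S t + w t • p (κ t) := fun t => rfl
  have Ssum : ∀ k, S k = ∑ i ∈ Finset.range k, w i • p (κ i) := by
    intro k
    induction k with
    | zero => rfl
    | succ k ih => rw [SS, Finset.sum_range_succ, ih]
  clear_value κ S
  clear stS st nx
  have estay : ∀ t, S (t + 1) - W (t + 1) • p (κ t) = S t - W t • p (κ t) := by
    intro t; rw [SS, hWS, add_smul]; abel
  have hmono : Monotone κ := monotone_nat_of_le_succ fun t => by rw [κS]; split_ifs <;> simp
  have hlt : ∀ t, κ t ≤ t := by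
    intro t
    induction t with
    | zero => simp [κ0]
    | succ t ih => rw [κS]; split_ifs <;> omega
  have hreach : ∀ m, ∃ k ≥ m, κ k = m := by
    intro m
    suffices ∃ k, κ k = m by
      obtain ⟨k, hk⟩ := this
      exact ⟨k, hk ▸ hlt k, hk⟩
    induction m with
    | zero => exact ⟨0, κ0⟩
    | succ m ih =>
      obtain ⟨k, hk⟩ := ih
      by_contra hc
      push Not at hc
      have hall : ∀ j, κ (k + j) = m ∧ S (k + j) - W (k + j) • p m = S k - W k • p m := by
        intro j
        induction j with
        | zero => exact ⟨hk, rfl⟩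
        | succ j ih2 =>
          have h1 : κ (k + j + 1) = m := by
            have h2 := κS (k + j)
            have h3 := hc (k + j + 1)
            split_ifs at h2 with h
            · rw [ih2.1] at h2; exact absurd h2 h3
            · rw [h2, ih2.1]
          refine ⟨h1, ?_⟩
          have := estay (k + j)
          rw [ih2.1] at this
          rw [← add_assoc, this, ih2.2]
      obtain ⟨K, hK⟩ := (hWt.eventually_ge_atTop (‖S k - W k • p m‖ * ((m : ℝ) + 1))).exists_forall_of_atTop
      have h1 := hK (k + K) (by omega)
      have h2 := κS (k + K)
      rw [(hall K).1, (hall K).2, if_pos ((le_div_iff₀ (by positivity)).2 h1)] at h2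
      exact hc _ h2
  have hinv : ∀ J m, κ J = m + 1 → ‖S J - W J • p (κ J)‖ ≤
      W J * (1 / ((m : ℝ) + 1) + dist (p m) (p (m + 1))) := by
    intro J
    induction J with
    | zero => intro m h; rw [κ0] at h; omega
    | succ J ih =>
      intro m h
      have h2 := κS J
      split_ifs at h2 with hc
      · have hm : κ J = m := by omega
        rw [hm] at hc
        have e : S (J + 1) - W (J + 1) • p (m + 1) =
            (S J - W J • p m) + W (J + 1) • (p m - p (m + 1)) := by
          have := estay J
          rw [hm] at this
          rw [← this, smul_sub]; abel
        rw [h, e]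
        refine (norm_add_le _ _).trans ?_
        rw [norm_smul, Real.norm_of_nonneg (hW0 _), ← dist_eq_norm (p m), mul_add]
        have : W J / ((m:ℝ) + 1) ≤ W (J + 1) * (1 / ((m:ℝ) + 1)) := by
          rw [div_eq_mul_one_div]
          have : W J ≤ W (J + 1) := by rw [hWS]; linarith [hw J]
          gcongr
        linarith
      · rw [h2, estay]
        refine (ih m (h2 ▸ h)).trans ?_
        have : W J ≤ W (J + 1) := by rw [hWS]; linarith [hw J]
        gcongr
  refine ⟨κ, hreach, ?_⟩
  intro ε hε
  have hψ : Tendsto (fun m : ℕ => 1 / ((m : ℝ) + 1) + dist (p m) (p (m + 1))) atTop (𝓝 0) := by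
    simpa using tendsto_one_div_add_atTop_nhds_zero_nat.add hp
  obtain ⟨m0, hm0⟩ := (hψ.eventually_le_const hε).exists_forall_of_atTop
  obtain ⟨k0, -, hk0⟩ := hreach (m0 + 1)
  refine ⟨k0, fun k hk => ?_⟩
  have h1 : m0 + 1 ≤ κ k := hk0 ▸ hmono hk
  obtain ⟨m, hm⟩ : ∃ m, κ k = m + 1 := ⟨κ k - 1, by omega⟩
  rw [← Ssum]
  refine (hinv k m hm).trans ?_
  rw [mul_comm]
  exact mul_le_mul_of_nonneg_right (hm0 m (by omega)) (hW0 k)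

/-- greedy discretization -/
lemma greedy (q : ℕ → Fin 3 → ℝ) (hq : ∀ k, q k ∈ simplexS) (w : ℕ → ℝ) (hw : ∀ i, 0 ≤ w i) :
    ∃ a : ℕ → Fin 3, ∀ k j, (∑ i ∈ Finset.range k, w i * ((Pi.single (a i) 1 : Fin 3 → ℝ) j - q i j)) ^ 2 ≤
      3 * ∑ i ∈ Finset.range k, w i ^ 2 := by
  have hsel : ∀ R : Fin 3 → ℝ, ∃ a, ∀ b, R a ≤ R b := fun R => Finite.exists_min R
  choose sel hsel using hsel
  let nx : ℕ → (Fin 3 → ℝ) → (Fin 3 → ℝ) := fun k R =>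
    fun j => R j + w k * ((Pi.single (sel R) 1 : Fin 3 → ℝ) j - q k j)
  let R : ℕ → (Fin 3 → ℝ) := fun t => Nat.rec 0 nx t
  have RS : ∀ k j, R (k + 1) j = R k j + w k * ((Pi.single (sel (R k)) 1 : Fin 3 → ℝ) j - q k j) :=
    fun k j => rfl
  have R0 : R 0 = 0 := rfl
  clear_value R
  clear nx
  have hsum : ∀ k j, R k j = ∑ i ∈ Finset.range k, w i * ((Pi.single (sel (R i)) 1 : Fin 3 → ℝ) j - q i j) := by
    intro k j
    induction k with
    | zero => simp [R0]
    | succ k ih => rw [RS, Finset.sum_range_succ, ih]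
  have hsq : ∀ k, ∑ j, R k j ^ 2 ≤ 3 * ∑ i ∈ Finset.range k, w i ^ 2 := by
    intro k
    induction k with
    | zero => simp [R0]
    | succ k ih =>
      rw [Finset.sum_range_succ]
      have e : ∑ j, R (k + 1) j ^ 2 = ∑ j, R k j ^ 2 +
          2 * w k * (∑ j, R k j * ((Pi.single (sel (R k)) 1 : Fin 3 → ℝ) j - q k j)) +
          w k ^ 2 * ∑ j, ((Pi.single (sel (R k)) 1 : Fin 3 → ℝ) j - q k j) ^ 2 := by
        rw [Finset.mul_sum, Finset.mul_sum, ← Finset.sum_add_distrib, ← Finset.sum_add_distrib]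
        apply Finset.sum_congr rfl
        intro j _
        rw [RS]; ring
      have i1 : ∑ j, R k j * ((Pi.single (sel (R k)) 1 : Fin 3 → ℝ) j - q k j) ≤ 0 := by
        have t1 : ∑ j, R k j * ((Pi.single (sel (R k)) 1 : Fin 3 → ℝ) j - q k j) =
            R k (sel (R k)) - ∑ j, R k j * q k j := by
          simp only [mul_sub, Finset.sum_sub_distrib]
          congr 1
          simp [Pi.single_apply]
        have t2 : R k (sel (R k)) = ∑ j, R k (sel (R k)) * q k j := by
          rw [← Finset.mul_sum, (hq k).2, mul_one]
        have t3 : ∑ j, R k (sel (R k)) * q k j ≤ ∑ j, R k j * q k j :=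
          Finset.sum_le_sum fun j _ => mul_le_mul_of_nonneg_right (hsel _ j) ((hq k).1 j).1
        linarith
      have i2 : ∑ j, ((Pi.single (sel (R k)) 1 : Fin 3 → ℝ) j - q k j) ^ 2 ≤ 3 := by
        calc _ ≤ ∑ j : Fin 3, (1:ℝ) := by
              apply Finset.sum_le_sum
              intro j _
              have := (hq k).1 j
              rw [Pi.single_apply]
              split_ifs <;> nlinarith [this.1, this.2]
          _ = 3 := by simp
      have h3 := mul_nonneg (sq_nonneg (w k)) (sub_nonneg.2 i2)
      have h4 := mul_nonneg (hw k) (neg_nonneg.2 i1)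
      rw [e]
      nlinarith
  refine ⟨fun i => sel (R i), fun k j => ?_⟩
  rw [← hsum]
  exact (Finset.single_le_sum (f := fun j => R k j ^ 2) (fun j _ => sq_nonneg _) (Finset.mem_univ j)).trans (hsq k)

lemma symbols (C : Set (Fin 3 → ℝ)) (hCS : C ⊆ simplexS) (hCconn : IsConnected C) :
    ∃ (a : ℕ → Fin 3) (c : ℕ → Fin 3 → ℝ), (∀ k, c k ∈ C) ∧
      (∀ x ∈ C, ∀ ε > 0, ∀ T, ∃ k ≥ T, dist (c k) x < ε) ∧
      ∀ ε > 0, ∃ k0, ∀ k ≥ k0, ∀ j,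
        |∑ i ∈ Finset.range k, (nn i : ℝ) * (Pi.single (a i) 1 : Fin 3 → ℝ) j - (WW k : ℝ) * c k j| ≤
          ε * WW k := by
  have : PreconnectedSpace C := Subtype.preconnectedSpace hCconn.isPreconnected
  have : Nonempty C := hCconn.nonempty.to_subtype
  obtain ⟨p, hp1, hp2⟩ := seq_ex (X := C)
  have hWt : Tendsto (fun k => (WW k : ℝ)) atTop atTop := by
    rw [tendsto_atTop]
    intro b
    obtain ⟨k0, hk0⟩ := WW_big 1
    obtain ⟨m, hm⟩ := exists_nat_ge b
    filter_upwards [eventually_ge_atTop k0, eventually_ge_atTop m] with k h1 h2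
    have h3 := hk0 k h1
    have : m ≤ WW k := by omega
    exact hm.trans (by exact_mod_cast this)
  obtain ⟨κ, hκ, herr⟩ := slow (fun t => (p t : Fin 3 → ℝ)) hp1 (fun i => (nn i : ℝ))
    (fun k => (WW k : ℝ)) (fun i => by positivity) (fun k => by unfold WW; push_cast; rfl) hWt
  obtain ⟨a, ha⟩ := greedy (fun k => (p (κ k) : Fin 3 → ℝ)) (fun k => hCS (p (κ k)).2)
    (fun i => (nn i : ℝ)) (fun i => by positivity)
  refine ⟨a, fun k => p (κ k), fun k => (p (κ k)).2, ?_, ?_⟩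
  · intro x hx ε hε T
    obtain ⟨t, ht, hd⟩ := hp2 ⟨x, hx⟩ ε hε T
    obtain ⟨k, hk, hkt⟩ := hκ t
    refine ⟨k, by omega, ?_⟩
    simp only [hkt]
    exact hd
  · intro ε hε
    obtain ⟨k1, hk1⟩ := herr (ε / 2) (by positivity)
    obtain ⟨M, hM⟩ := exists_nat_ge (12 / ε ^ 2)
    obtain ⟨k2, hk2⟩ := WW_big M
    refine ⟨max k1 k2, fun k hk j => ?_⟩
    have g1 := hk1 k (le_trans (le_max_left _ _) hk)
    have g2 := hk2 k (le_trans (le_max_right _ _) hk)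
    have g1j := (norm_le_pi_norm _ j).trans g1
    have g3 := ha k j
    have hWn : (0:ℝ) ≤ WW k := by positivity
    have g4 : ∑ i ∈ Finset.range k, (nn i : ℝ) ^ 2 ≤ k * WW k := by
      unfold WW
      push_cast
      rw [Finset.mul_sum]
      apply Finset.sum_le_sum
      intro i hi
      rw [pow_two]
      have : nn i ≤ k := (nn_le i).trans (Finset.mem_range.1 hi).le
      have : (nn i : ℝ) ≤ k := by exact_mod_cast this
      gcongr
    have g5 : 12 * (k:ℝ) ≤ ε ^ 2 * WW k := by
      have h1 : (M:ℝ) * k ≤ WW k := by exact_mod_cast g2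
      have h2 := (div_le_iff₀ (by positivity)).1 hM
      have hk0 : (0:ℝ) ≤ k := by positivity
      calc 12 * (k:ℝ) ≤ (M * ε ^ 2) * k := by gcongr
        _ = ε ^ 2 * (M * k) := by ring
        _ ≤ _ := by gcongr
    have g6 : |∑ i ∈ Finset.range k, (nn i : ℝ) * ((Pi.single (a i) 1 : Fin 3 → ℝ) j - (p (κ i)).1 j)| ≤
        ε / 2 * WW k := by
      apply abs_le_of_sq_le_sq _ (by positivity)
      refine g3.trans ?_
      nlinarith
    rw [Real.norm_eq_abs] at g1j
    simp only [Pi.sub_apply, Finset.sum_apply, Pi.smul_apply, smul_eq_mul] at g1j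
    have e : ∑ i ∈ Finset.range k, (nn i : ℝ) * (Pi.single (a i) 1 : Fin 3 → ℝ) j - (WW k : ℝ) * (p (κ k)).1 j =
        ∑ i ∈ Finset.range k, (nn i : ℝ) * ((Pi.single (a i) 1 : Fin 3 → ℝ) j - (p (κ i)).1 j) +
        (∑ i ∈ Finset.range k, (nn i : ℝ) * (p (κ i)).1 j - (WW k : ℝ) * (p (κ k)).1 j) := by
      simp only [mul_sub, Finset.sum_sub_distrib]; ring
    rw [e]
    refine (abs_add_le _ _).trans ?_
    linarith

/-- Birkhoff sums -/
def BS (φ : ℝ → ℝ) (n : ℕ) (x : ℝ) : ℝ := ∑ i ∈ Finset.range n, φ (theMap^[i] x)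

lemma BS_add (φ : ℝ → ℝ) (m n : ℕ) (x : ℝ) : BS φ (m + n) x = BS φ m x + BS φ n (theMap^[m] x) := by
  unfold BS
  rw [Finset.sum_range_add]
  congr 1
  apply Finset.sum_congr rfl
  intro i _
  rw [add_comm m i, Function.iterate_add_apply]

lemma BS_bound {φ : ℝ → ℝ} {M : ℝ} (hM : ∀ x, |φ x| ≤ M) (n : ℕ) (x : ℝ) : |BS φ n x| ≤ n * M := by
  unfold BS
  refine (Finset.abs_sum_le_sum_abs _ _).trans ?_
  calc _ ≤ ∑ i ∈ Finset.range n, M := Finset.sum_le_sum fun i _ => hM _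
    _ = _ := by simp

lemma iter_gw (w : List (Fin 3)) {t : ℝ} (ht : t ∈ Ioo (0:ℝ) 1) : theMap^[w.length] (gw w t) = t := by
  induction w with
  | nil => simp
  | cons a w ih =>
    rw [List.length_cons, Function.iterate_succ_apply, gw_cons, theMap_gi a (gw_mem01o w ht), ih]

lemma BS_rep (φ : ℝ → ℝ) (n : ℕ) (a : Fin 3) {t : ℝ} (ht : t ∈ Ioo (0:ℝ) 1) :
    BS φ n (gw (List.replicate n a) t) = ∑ j ∈ Finset.range n, φ (gw (List.replicate (j + 1) a) t) := by
  induction n with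
  | zero => simp [BS]
  | succ n ih =>
    rw [add_comm n 1, BS_add]
    have h1 : theMap^[1] (gw (List.replicate (1 + n) a) t) = gw (List.replicate n a) t := by
      rw [add_comm 1 n, List.replicate_succ, gw_cons]
      exact theMap_gi a (gw_mem01o _ ht)
    rw [h1, ih, add_comm 1 n, Finset.sum_range_succ, add_comm]
    simp [BS]

lemma rep_close (a : Fin 3) (j : ℕ) {t : ℝ} (ht : t ∈ Icc (0:ℝ) 1) :
    |gw (List.replicate j a) t - theFixedPts a| ≤ len (List.replicate j a) := by
  have hp := pt_mem a
  have e := gw_rep_pt a j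
  have h1 := gw_mono (List.replicate j a) ht.1
  have h2 := gw_mono (List.replicate j a) ht.2
  have h3 := gw_mono (List.replicate j a) hp.1
  have h4 := gw_mono (List.replicate j a) hp.2
  rw [e] at h3 h4
  unfold len
  rw [abs_le]
  constructor <;> linarith

lemma run_unif {φ : ℝ → ℝ} (hφ : Continuous φ) {ε : ℝ} (hε : 0 < ε) :
    ∃ L : ℕ, ∀ j ≥ L, ∀ a : Fin 3, ∀ t ∈ Icc (0:ℝ) 1,
      |φ (gw (List.replicate (j + 1) a) t) - φ (theFixedPts a)| ≤ ε := by
  have h1 : ∀ a : Fin 3, ∃ δ > 0, ∀ y, |y - theFixedPts a| < δ → |φ y - φ (theFixedPts a)| < ε := by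
    intro a
    have := Metric.continuous_iff.1 hφ (theFixedPts a) ε hε
    simpa [Real.dist_eq] using this
  choose δ hδ hc using h1
  obtain ⟨L, hL⟩ := exists_nat_gt (∑ a, 1 / δ a ^ 2)
  refine ⟨L, fun j hj a t ht => (hc a _ ?_).le⟩
  refine lt_of_le_of_lt (rep_close a (j + 1) ht) ?_
  have hd := len_decay (List.replicate (j + 1) a)
  rw [List.length_replicate] at hd
  have hp := len_pos (List.replicate (j + 1) a)
  generalize len (List.replicate (j + 1) a) = l at *
  have h2 : 1 / δ a ^ 2 ≤ ∑ a, 1 / δ a ^ 2 :=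
    Finset.single_le_sum (f := fun a => 1 / δ a ^ 2) (fun i _ => by positivity) (Finset.mem_univ a)
  have h3 : 1 / δ a ^ 2 < j := by
    have : (L:ℝ) ≤ j := by exact_mod_cast hj
    linarith
  have hda := hδ a
  rw [div_lt_iff₀ (by positivity)] at h3
  by_contra hcon
  push Not at hcon
  have h4 : δ a ^ 2 ≤ l ^ 2 := pow_le_pow_left₀ hda.le hcon 2
  push_cast at hd
  have hj0 : (0:ℝ) ≤ j := by positivity
  nlinarith [sq_nonneg l]

lemma run_sum {φ : ℝ → ℝ} {M ε : ℝ} (hM : ∀ x, |φ x| ≤ M) (hε : 0 < ε) {L : ℕ}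
    (hL : ∀ j ≥ L, ∀ a : Fin 3, ∀ t ∈ Icc (0:ℝ) 1,
      |φ (gw (List.replicate (j + 1) a) t) - φ (theFixedPts a)| ≤ ε) (n : ℕ) (a : Fin 3) {t : ℝ}
    (ht : t ∈ Ioo (0:ℝ) 1) :
    |BS φ n (gw (List.replicate n a) t) - n * φ (theFixedPts a)| ≤ n * ε + 2 * M * L := by
  have hM0 : 0 ≤ M := (abs_nonneg _).trans (hM 0)
  rw [BS_rep φ n a ht]
  have e : ∑ j ∈ Finset.range n, φ (gw (List.replicate (j + 1) a) t) - n * φ (theFixedPts a) =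
      ∑ j ∈ Finset.range n, (φ (gw (List.replicate (j + 1) a) t) - φ (theFixedPts a)) := by
    rw [Finset.sum_sub_distrib]; simp
  rw [e]
  clear e
  refine (Finset.abs_sum_le_sum_abs _ _).trans ?_
  induction n with
  | zero => simp; positivity
  | succ n ih =>
    by_cases hn : L ≤ n
    · rw [Finset.sum_range_succ]
      have := hL n hn a t ⟨ht.1.le, ht.2.le⟩
      push_cast
      linarith
    · have h1 : ∑ j ∈ Finset.range (n + 1), |φ (gw (List.replicate (j + 1) a) t) - φ (theFixedPts a)| ≤
          ∑ j ∈ Finset.range (n + 1), 2 * M := by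
        apply Finset.sum_le_sum
        intro j _
        have h1 := hM (gw (List.replicate (j + 1) a) t)
        have h2 := hM (theFixedPts a)
        refine (abs_sub _ _).trans ?_
        linarith
      have h2 : ((n + 1 : ℕ) : ℝ) ≤ L := by exact_mod_cast (by omega : n + 1 ≤ L)
      have h3 : (0:ℝ) ≤ ((n + 1 : ℕ) : ℝ) := by positivity
      simp only [Finset.sum_const, Finset.card_range, nsmul_eq_mul] at h1
      nlinarith [mul_nonneg h3 hε.le]

section Orbit
variable (a : ℕ → Fin 3) (ℓ : ℕ) (ω : ℕ → {v // v ∈ Wd ℓ})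

/-- block words -/
def bb (k : ℕ) : List (Fin 3) := bl nn a k (ω k)

lemma Xo (k : ℕ) : Xp (bb a ℓ ω) k ∈ Ioo (0:ℝ) 1 := by
  rw [Xp_rec]
  have h := gi_one_mem (gw_mem01 (List.replicate (nn k) (a k)) (Xp_mem (bb a ℓ ω) (k + 1)))
  conv in (gw (bb a ℓ ω k)) => rw [bb]
  rw [bl, gw_append, gw_cons]
  exact gw_mem01o _ ⟨by linarith [h.1], by linarith [h.2]⟩

/-- block times -/
def NN (k : ℕ) : ℕ := (ℓ + 1) * k + WW k

lemma NN_succ (k : ℕ) : NN ℓ (k + 1) = NN ℓ k + (ℓ + 1 + nn k) := by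
  unfold NN; rw [WW_succ]; ring

lemma bb_len (k : ℕ) : (bb a ℓ ω k).length = ℓ + 1 + nn k := by
  simp [bb, bl, length_of_mem ℓ (ω k).2]; ring

lemma iterN (k : ℕ) : theMap^[NN ℓ k] (Xp (bb a ℓ ω) 0) = Xp (bb a ℓ ω) k := by
  induction k with
  | zero => simp [NN, WW]
  | succ k ih =>
    rw [NN_succ, add_comm, Function.iterate_add_apply, ih, Xp_rec _ k, ← bb_len a ℓ ω k]
    exact iter_gw _ (Xo a ℓ ω (k + 1))

lemma block_sum {φ : ℝ → ℝ} {M ε : ℝ} (hM : ∀ x, |φ x| ≤ M) (hε : 0 < ε) {L : ℕ}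
    (hL : ∀ j ≥ L, ∀ a : Fin 3, ∀ t ∈ Icc (0:ℝ) 1,
      |φ (gw (List.replicate (j + 1) a) t) - φ (theFixedPts a)| ≤ ε) (k : ℕ) :
    |BS φ (NN ℓ k) (Xp (bb a ℓ ω) 0) - ∑ i ∈ Finset.range k, (nn i : ℝ) * φ (theFixedPts (a i))| ≤
      k * (M * (ℓ + 1) + 2 * M * L) + WW k * ε := by
  induction k with
  | zero => simp [NN, WW, BS]
  | succ k ih =>
    rw [NN_succ, BS_add, iterN, BS_add, Finset.sum_range_succ, WW_succ]
    have h1 := BS_bound hM (ℓ + 1) (Xp (bb a ℓ ω) k)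
    have h2 : theMap^[ℓ + 1] (Xp (bb a ℓ ω) k) =
        gw (List.replicate (nn k) (a k)) (Xp (bb a ℓ ω) (k + 1)) := by
      rw [Xp_rec _ k]
      have e : gw (bb a ℓ ω k) (Xp (bb a ℓ ω) (k + 1)) = gw ((ω k).1 ++ [1])
          (gw (List.replicate (nn k) (a k)) (Xp (bb a ℓ ω) (k + 1))) := by
        rw [← gw_append]
        simp [bb, bl]
      rw [e]
      have := iter_gw ((ω k).1 ++ [1]) (gw_mem01o (List.replicate (nn k) (a k)) (Xo a ℓ ω (k + 1)))
      rw [List.length_append, length_of_mem ℓ (ω k).2] at this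
      exact this
    rw [h2]
    have h3 := run_sum hM hε hL (nn k) (a k) (Xo a ℓ ω (k + 1))
    rw [abs_le] at *
    push_cast at *
    constructor <;> nlinarith [h1.1, h1.2, h3.1, h3.2, ih.1, ih.2]

lemma orb_main (c : ℕ → Fin 3 → ℝ) (hcS : ∀ k, c k ∈ simplexS)
    (hc : ∀ ε > 0, ∃ k0, ∀ k ≥ k0, ∀ j,
        |∑ i ∈ Finset.range k, (nn i : ℝ) * (Pi.single (a i) 1 : Fin 3 → ℝ) j - (WW k : ℝ) * c k j| ≤
          ε * WW k) {φ : ℝ → ℝ} (hφ : Continuous φ) {M : ℝ} (hM : ∀ x, |φ x| ≤ M) (ε' : ℝ) (hε' : 0 < ε') :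
    ∃ k0, ∀ k ≥ k0, ∀ n, NN ℓ k ≤ n → n < NN ℓ (k + 1) →
      |BS φ n (Xp (bb a ℓ ω) 0) - n * ∑ j, c k j * φ (theFixedPts j)| ≤ ε' * n := by
  have hM0 : 0 ≤ M := (abs_nonneg _).trans (hM 0)
  obtain ⟨ε, hε, hεε⟩ : ∃ ε > 0, (2 + 3 * M) * ε = ε' := ⟨ε' / (2 + 3 * M), by positivity, by field_simp⟩
  obtain ⟨L, hL⟩ := run_unif hφ hε
  obtain ⟨k1, hk1⟩ := hc ε hε
  set K : ℝ := M * (ℓ + 2) + (M * (ℓ + 1) + 2 * M * L) + M * (2 * ℓ + 3) with hK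
  have hK0 : 0 ≤ K := by positivity
  obtain ⟨m, hm⟩ := exists_nat_ge (2 * K / ε)
  obtain ⟨k2, hk2⟩ := WW_big m
  refine ⟨max (max k1 k2) 1, fun k hk n hn1 hn2 => ?_⟩
  have hkk1 : k1 ≤ k := le_trans (le_trans (le_max_left _ _) (le_max_left _ _)) hk
  have hkk2 : k2 ≤ k := le_trans (le_trans (le_max_right _ _) (le_max_left _ _)) hk
  have hkk3 : 1 ≤ k := le_trans (le_max_right _ _) hk
  have g1 := hk1 k hkk1
  have g2 := hk2 k hkk2
  set Y := ∑ j, c k j * φ (theFixedPts j) with hY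
  have hYM : |Y| ≤ M := by
    refine (Finset.abs_sum_le_sum_abs _ _).trans ?_
    calc ∑ j, |c k j * φ (theFixedPts j)| ≤ ∑ j, c k j * M := by
          apply Finset.sum_le_sum
          intro j _
          rw [abs_mul, abs_of_nonneg ((hcS k).1 j).1]
          exact mul_le_mul_of_nonneg_left (hM _) ((hcS k).1 j).1
      _ = M := by rw [← Finset.sum_mul, (hcS k).2, one_mul]
  -- first piece
  obtain ⟨r, rfl⟩ := Nat.exists_eq_add_of_le hn1
  have hr : r ≤ ℓ + 1 + k := by
    rw [NN_succ] at hn2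
    have := nn_le k
    omega
  have hr' : (r : ℝ) ≤ ℓ + 1 + k := by exact_mod_cast hr
  have p1 : |BS φ r (theMap^[NN ℓ k] (Xp (bb a ℓ ω) 0))| ≤ M * (ℓ + 1 + k) := by
    refine (BS_bound hM _ _).trans ?_
    rw [mul_comm]
    gcongr
  have p2 := block_sum a ℓ ω hM hε hL k
  have p3 : |∑ i ∈ Finset.range k, (nn i : ℝ) * φ (theFixedPts (a i)) - WW k * Y| ≤ 3 * M * (ε * WW k) := by
    have e : ∑ i ∈ Finset.range k, (nn i : ℝ) * φ (theFixedPts (a i)) - WW k * Y =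
        ∑ j, (∑ i ∈ Finset.range k, (nn i : ℝ) * (Pi.single (a i) 1 : Fin 3 → ℝ) j - (WW k : ℝ) * c k j) *
          φ (theFixedPts j) := by
      simp only [sub_mul, Finset.sum_sub_distrib, Finset.sum_mul]
      rw [Finset.sum_comm, hY, Finset.mul_sum]
      congr 1
      · apply Finset.sum_congr rfl
        intro i _
        simp [Pi.single_apply]
      · apply Finset.sum_congr rfl
        intro i _
        ring
    rw [e]
    refine (Finset.abs_sum_le_sum_abs _ _).trans ?_
    calc _ ≤ ∑ j : Fin 3, (ε * WW k) * M := by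
          apply Finset.sum_le_sum
          intro j _
          rw [abs_mul]
          exact mul_le_mul (g1 j) (hM _) (abs_nonneg _) (by positivity)
      _ = _ := by simp; ring
  have hNN : ((NN ℓ k : ℕ) : ℝ) = (ℓ + 1) * k + WW k := by unfold NN; push_cast; ring
  have hk1' : (1:ℝ) ≤ k := by exact_mod_cast hkk3
  have p4 : |((WW k : ℝ) - ((NN ℓ k + r : ℕ) : ℝ)) * Y| ≤ M * (2 * ℓ + 3) * k := by
    rw [abs_mul, mul_assoc M, mul_comm M]
    apply mul_le_mul _ hYM (abs_nonneg _) (by positivity)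
    push_cast
    rw [hNN, abs_le]
    have hr0 : (0:ℝ) ≤ r := by positivity
    have hl0 : (0:ℝ) ≤ ℓ := by positivity
    constructor <;> nlinarith
  have p1' : M * (ℓ + 1 + k) ≤ M * (ℓ + 2) * k := by
    rw [mul_assoc]
    have hl0 : (0:ℝ) ≤ ℓ := by positivity
    apply mul_le_mul_of_nonneg_left _ hM0
    nlinarith
  have hKk : K * k ≤ ε * WW k := by
    have h1 : (m:ℝ) * k ≤ WW k := by exact_mod_cast g2
    have h2 := (div_le_iff₀ hε).1 hm
    calc K * k ≤ (m * ε) * k := by gcongr; linarith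
      _ = ε * (m * k) := by ring
      _ ≤ _ := by gcongr
  have hWn : (WW k : ℝ) ≤ ((NN ℓ k + r : ℕ) : ℝ) := by
    push_cast
    rw [hNN]
    have : (0:ℝ) ≤ (ℓ + 1) * k := by positivity
    have hr0 : (0:ℝ) ≤ r := by positivity
    linarith
  rw [BS_add]
  have tot : |BS φ (NN ℓ k) (Xp (bb a ℓ ω) 0) + BS φ r (theMap^[NN ℓ k] (Xp (bb a ℓ ω) 0)) -
      ((NN ℓ k + r : ℕ) : ℝ) * Y| ≤ K * k + (1 + 3 * M) * (ε * WW k) := by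
    rw [abs_le] at *
    rw [hK]
    constructor <;> nlinarith [p1.1, p1.2, p2.1, p2.2, p3.1, p3.2, p4.1, p4.2]
  refine tot.trans ?_
  rw [← hεε]
  calc K * k + (1 + 3 * M) * (ε * WW k) ≤ (2 + 3 * M) * ε * WW k := by linarith
    _ ≤ _ := by gcongr

end Orbit

lemma int_emp (g : BoundedContinuousFunction ℝ ℝ) (n : ℕ) (x : ℝ) :
    ∫ y, g y ∂(empMeasure theMap n x) = BS g n x / n := by
  unfold empMeasure BS
  rw [integral_smul_measure, integral_finsetSum_measure (fun i _ => integrable_dirac (by simp))]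
  simp only [integral_dirac, ENNReal.toReal_inv, ENNReal.toReal_natCast, smul_eq_mul]
  rw [div_eq_inv_mul]

lemma int_nu (g : BoundedContinuousFunction ℝ ℝ) (p : Fin 3 → ℝ) (hp : p ∈ simplexS) :
    ∫ y, g y ∂(nuMeasure p) = ∑ j, p j * g (theFixedPts j) := by
  unfold nuMeasure
  rw [integral_finsetSum_measure (fun i _ => (integrable_dirac (by simp)).smul_measure (by simp))]
  apply Finset.sum_congr rfl
  intro j _
  rw [integral_smul_measure, integral_dirac, ENNReal.toReal_ofReal (hp.1 j).1, smul_eq_mul]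

lemma nu_finite (p : Fin 3 → ℝ) : IsFiniteMeasure (nuMeasure p) := by
  constructor
  unfold nuMeasure
  simp only [Measure.coe_finset_sum, Finset.sum_apply, Measure.smul_apply, smul_eq_mul]
  simp [ENNReal.sum_lt_top]

lemma V_lemma (C : Set (Fin 3 → ℝ)) (hCS : C ⊆ simplexS) (hCcl : IsClosed C) (x : ℝ)
    (c : ℕ → Fin 3 → ℝ) (hcC : ∀ n, c n ∈ C)
    (hclus : ∀ p ∈ C, ∀ ε > 0, ∀ T, ∃ k ≥ T, dist (c k) p < ε)
    (hlim : ∀ g : BoundedContinuousFunction ℝ ℝ,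
      Tendsto (fun n => ∫ y, g y ∂(empMeasure theMap (n + 1) x) - ∑ j, c n j * g (theFixedPts j)) atTop (𝓝 0)) :
    Vset theMap x = {ν | ∃ p ∈ C, ν = nuMeasure p} := by
  have hcomp : IsCompact C := by
    apply Metric.isCompact_of_isClosed_isBounded hCcl
    apply (Metric.isBounded_Icc (0 : Fin 3 → ℝ) 1).subset
    intro p hp
    exact ⟨fun i => ((hCS hp).1 i).1, fun i => ((hCS hp).1 i).2⟩
  have hcont : ∀ (g : BoundedContinuousFunction ℝ ℝ) (u : ℕ → ℕ) (p : Fin 3 → ℝ), StrictMono u →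
      Tendsto (fun k => c (u k)) atTop (𝓝 p) →
      Tendsto (fun k => ∫ y, g y ∂(empMeasure theMap (u k + 1) x)) atTop (𝓝 (∑ j, p j * g (theFixedPts j))) := by
    intro g u p hu hup
    have h1 := (hlim g).comp hu.tendsto_atTop
    have h2 : Tendsto (fun k => ∑ j, c (u k) j * g (theFixedPts j)) atTop (𝓝 (∑ j, p j * g (theFixedPts j))) := by
      apply tendsto_finset_sum
      intro j _
      exact ((tendsto_pi_nhds.1 hup) j).mul_const _
    have h3 := h1.add h2
    simpa [Function.comp_def] using h3
  ext ν
  constructor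
  · rintro ⟨u, hu, hν⟩
    obtain ⟨p, hp, ψ, hψ, hlimp⟩ := hcomp.tendsto_subseq (fun k => hcC (u k))
    refine ⟨p, hp, ?_⟩
    have heqg : ∀ g : BoundedContinuousFunction ℝ ℝ, ∫ y, g y ∂ν = ∫ y, g y ∂(nuMeasure p) := by
      intro g
      rw [int_nu g p (hCS hp)]
      exact tendsto_nhds_unique ((hν g).comp hψ.tendsto_atTop) (hcont g (u ∘ ψ) p (hu.comp hψ) hlimp)
    have hfin : IsFiniteMeasure ν := by
      have h1 := heqg (BoundedContinuousFunction.const ℝ 1)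
      rw [int_nu _ p (hCS hp)] at h1
      simp only [BoundedContinuousFunction.const_apply, mul_one, (hCS hp).2] at h1
      simp only [integral_const, smul_eq_mul, mul_one] at h1
      constructor
      rw [lt_top_iff_ne_top]
      intro htop
      rw [Measure.real, htop] at h1
      simp at h1
    have := nu_finite p
    exact ext_of_forall_integral_eq_of_IsFiniteMeasure heqg
  · rintro ⟨p, hp, rfl⟩
    have hfr : ∀ n : ℕ, ∃ᶠ k in atTop, dist (c k) p < 1 / ((n : ℝ) + 1) := by
      intro n
      rw [frequently_atTop]
      intro T
      exact hclus p hp _ (by positivity) T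
    obtain ⟨u, hu, hup⟩ := extraction_forall_of_frequently hfr
    refine ⟨u, hu, fun g => ?_⟩
    rw [int_nu g p (hCS hp)]
    apply hcont g u p hu
    rw [tendsto_iff_dist_tendsto_zero]
    exact squeeze_zero (fun _ => dist_nonneg) (fun k => (hup k).le) tendsto_one_div_add_atTop_nhds_zero_nat

lemma NN_strict (ℓ : ℕ) : StrictMono (NN ℓ) := strictMono_nat_of_lt_succ fun k => by
  rw [NN_succ]; omega

lemma point_V (C : Set (Fin 3 → ℝ)) (hCS : C ⊆ simplexS) (hCcl : IsClosed C)
    (a : ℕ → Fin 3) (c : ℕ → Fin 3 → ℝ) (hcC : ∀ k, c k ∈ C)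
    (hclus : ∀ x ∈ C, ∀ ε > 0, ∀ T, ∃ k ≥ T, dist (c k) x < ε)
    (hc : ∀ ε > 0, ∃ k0, ∀ k ≥ k0, ∀ j,
        |∑ i ∈ Finset.range k, (nn i : ℝ) * (Pi.single (a i) 1 : Fin 3 → ℝ) j - (WW k : ℝ) * c k j| ≤
          ε * WW k) (ℓ : ℕ) (ω : ℕ → {v // v ∈ Wd ℓ}) :
    Vset theMap (Xp (bb a ℓ ω) 0) = {ν | ∃ p ∈ C, ν = nuMeasure p} := by
  have hidx : ∀ n : ℕ, ∃ k, NN ℓ k ≤ n ∧ n < NN ℓ (k + 1) := by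
    intro n
    induction n with
    | zero =>
      refine ⟨0, by simp [NN, WW], ?_⟩
      rw [NN_succ]; omega
    | succ n ih =>
      obtain ⟨k, h1, h2⟩ := ih
      by_cases h : n + 1 < NN ℓ (k + 1)
      · exact ⟨k, by omega, h⟩
      · refine ⟨k + 1, by omega, ?_⟩
        have := NN_strict ℓ (Nat.lt_succ_self (k + 1))
        simp only [Nat.succ_eq_add_one] at this
        omega
  choose K hK1 hK2 using hidx
  have hKN : ∀ k, K (NN ℓ k) = k := by
    intro k
    have h1 := (NN_strict ℓ).le_iff_le.1 (hK1 (NN ℓ k))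
    have h2 := (NN_strict ℓ).lt_iff_lt.1 (hK2 (NN ℓ k))
    omega
  apply V_lemma C hCS hCcl _ (fun n => c (K (n + 1))) (fun n => hcC _)
  · intro p hp ε hε T
    obtain ⟨k, hk, hd⟩ := hclus p hp ε hε (T + 1)
    have h1 : k ≤ NN ℓ k := (NN_strict ℓ).le_apply
    refine ⟨NN ℓ k - 1, by omega, ?_⟩
    have : NN ℓ k - 1 + 1 = NN ℓ k := by omega
    simp only [this, hKN]
    exact hd
  · intro g
    rw [Metric.tendsto_atTop]
    intro ε hε
    obtain ⟨k0, hk0⟩ := orb_main a ℓ ω c (fun k => hCS (hcC k)) hc g.continuous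
      (fun x => by rw [← Real.norm_eq_abs]; exact g.norm_coe_le_norm x) (ε / 2) (by positivity)
    refine ⟨NN ℓ k0, fun n hn => ?_⟩
    have h1 : k0 ≤ K (n + 1) := by
      have := hK2 (n + 1)
      have h3 : NN ℓ k0 < NN ℓ (K (n + 1) + 1) := by omega
      have := (NN_strict ℓ).lt_iff_lt.1 h3
      omega
    have h2 := hk0 _ h1 (n + 1) (hK1 _) (hK2 _)
    rw [int_emp, Real.dist_eq, sub_zero]
    set Y := ∑ j, c (K (n + 1)) j * g (theFixedPts j)
    have hn0 : (0:ℝ) < ((n + 1 : ℕ) : ℝ) := by positivity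
    have e : BS g (n + 1) (Xp (bb a ℓ ω) 0) / ((n + 1 : ℕ) : ℝ) - Y =
        (BS g (n + 1) (Xp (bb a ℓ ω) 0) - ((n + 1 : ℕ) : ℝ) * Y) / ((n + 1 : ℕ) : ℝ) := by
      field_simp
    rw [e, abs_div, abs_of_pos hn0, div_lt_iff₀ hn0]
    refine lt_of_le_of_lt h2 ?_
    nlinarith

/-- For every nonempty closed connected `C ⊆ S`, the set
`{x ∈ [0,1] : V(x) = πC}` has Hausdorff dimension `1`. -/
theorem stmt1 (C : Set (Fin 3 → ℝ)) (hCS : C ⊆ simplexS)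
    (hCne : C.Nonempty) (hCcl : IsClosed C) (hCconn : IsConnected C) :
    dimH {x : ℝ | x ∈ Set.Icc (0:ℝ) 1 ∧
      Vset theMap x = {ν | ∃ p ∈ C, ν = nuMeasure p}} = 1 := by
  obtain ⟨a, c, hcC, hclus, hc⟩ := symbols C hCS hCconn
  apply le_antisymm
  · refine (dimH_mono (subset_univ _)).trans ?_
    rw [Real.dimH_univ]
  · apply le_of_forall_lt
    intro t ht
    lift t to NNReal using ht.ne_top
    have ht1 : (t : ℝ) < 1 := by exact_mod_cast ht
    have ht0 : (0:ℝ) ≤ t := t.2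
    set s : ℝ := ((t : ℝ) + 1) / 2 with hs
    have hs0 : 0 < s := by positivity
    have hts : (t : ℝ) < s := by rw [hs]; linarith
    have hs1 : s < 1 := by rw [hs]; linarith
    refine lt_of_lt_of_le ?_ (b := ENNReal.ofReal s) ?_
    · rw [← ENNReal.ofReal_coe_nnreal]
      exact (ENNReal.ofReal_lt_ofReal_iff hs0).2 hts
    set s1 : ℝ := (s + 1) / 2 with hs1d
    have hss1 : s < s1 := by rw [hs1d]; linarith
    have hs11 : s1 < 1 := by rw [hs1d]; linarith
    have hmp : 0 < mw [1] ^ s1 := Real.rpow_pos_of_pos (mw_pos _) _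
    obtain ⟨ℓ, hℓ⟩ := growth (hs0.trans hss1) hs11 ((mw [1] ^ s1)⁻¹)
    obtain ⟨Cst, hCst, hcost⟩ := cost4 ((3:ℝ) ^ (s1 - s)) (Real.one_lt_rpow (by norm_num) (by linarith))
    refine dim_lower ℓ nn a s s1 hs0 hss1 hs11 ?_ Cst hCst hcost _ ?_
    · rw [inv_le_iff_one_le_mul₀ hmp] at hℓ
      exact hℓ
    · intro ω
      exact ⟨Xp_mem _ 0, point_V C hCS hCcl a c hcC hclus hc ℓ ω⟩
end
end

section
/- Let λ > 1 be real, n ≥ 1 an integer, and C ∈ (0,1]. Let ℓ₁,…,ℓ_m be finitely many real numbers with 0 < ℓ_j ≤ λ^{−n} for each j and C ≤ ℓ₁ + ⋯ + ℓ_m ≤ 1. If s ∈ [0,1] satisfies ℓ₁^{1−s} + ⋯ + ℓ_m^{1−s} = 1, then s ≤ (1 − C)/(C·n·log λ). -/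
open Set

/-- Key estimate bounding `s = 1 - vdim Λ(A(n))` in the proof that the
repellers `Λ(A(n))` have Hausdorff dimension at least `1 - C'/n`. -/
theorem stmt12 (lam : ℝ) (hlam : 1 < lam) (n : ℕ) (hn : 1 ≤ n) (C : ℝ)
    (hC : C ∈ Set.Ioc (0:ℝ) 1)
    (m : ℕ) (ℓ : Fin m → ℝ) (hpos : ∀ j, 0 < ℓ j) (hle : ∀ j, ℓ j ≤ lam ^ (-(n : ℝ)))
    (hsum₁ : C ≤ ∑ j, ℓ j) (hsum₂ : ∑ j, ℓ j ≤ 1)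
    (s : ℝ) (hs : s ∈ Set.Icc (0:ℝ) 1) (heq : ∑ j, ℓ j ^ (1 - s) = 1) :
    s ≤ (1 - C) / (C * n * Real.log lam) := by
  obtain ⟨hC0, hC1⟩ := hC
  obtain ⟨hs0, hs1⟩ := hs
  have hL : 0 < Real.log lam := Real.log_pos hlam
  have hn0 : (0:ℝ) < n := by exact_mod_cast hn
  have hterm : ∀ j, ℓ j * (1 + s * (n * Real.log lam)) ≤ ℓ j ^ (1 - s) := by
    intro j
    have h1 : Real.log (ℓ j) ≤ -(n:ℝ) * Real.log lam := by
      rw [← Real.log_rpow (by linarith)]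
      exact Real.log_le_log (hpos j) (hle j)
    have h2 : ℓ j ^ (1 - s) = ℓ j * Real.exp (-(s * Real.log (ℓ j))) := by
      rw [sub_eq_add_neg, Real.rpow_add (hpos j), Real.rpow_one,
        Real.rpow_def_of_pos (hpos j)]
      congr 2
      ring
    rw [h2]
    apply mul_le_mul_of_nonneg_left _ (hpos j).le
    have h3 := Real.add_one_le_exp (-(s * Real.log (ℓ j)))
    have h4 := mul_le_mul_of_nonneg_left h1 hs0
    linarith
  have h5 : (∑ j, ℓ j) * (1 + s * (n * Real.log lam)) ≤ 1 := by
    rw [Finset.sum_mul]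
    refine le_trans ?_ heq.le
    exact Finset.sum_le_sum fun j _ => hterm j
  have h6 : 0 ≤ 1 + s * (n * Real.log lam) := by positivity
  have h7 := mul_le_mul_of_nonneg_right hsum₁ h6
  rw [le_div_iff₀ (by positivity)]
  linarith
end
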